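/- For all integers C ≥ 1 and D ≥ 0, [s_{(2^C,1^D)}] X_{GN_{C+D,C−1} ⊔ K_1} = [s_{(2^{C−1},1^{D+1})}] X_{GN_{C+D,C−1}}, where K_1 is a single isolated vertex and ⊔ denotes disjoint union of graphs; here (2^a,1^b) denotes the partition with a parts equal to 2 followed by b parts equal to 1. -/

import Mathlib

open scoped Classical

/-! ### Cells and Young diagrams -/

/-- A cell of a Young diagram: `(row, column)`, both 0-indexed, rows from the top. -/
abbrev Cell : Type := ℕ × ℕ

/-- The length of row `i` (0-indexed from the top) of the Young diagram of the
partition `lam`, whose parts are arranged in weakly decreasing order. -/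
def rowLen {N : ℕ} (lam : Nat.Partition N) (i : ℕ) : ℕ :=
  ((lam.parts.sort (· ≤ ·)).reverse).getD i 0

/-- The Young diagram of a partition, as a set of cells. -/
def diag {N : ℕ} (lam : Nat.Partition N) : Set Cell :=
  {c : Cell | c.2 < rowLen lam c.1}

/-- The number of rows (the length) of a partition. -/
def numRows {N : ℕ} (lam : Nat.Partition N) : ℕ := Multiset.card lam.parts

/-! ### Chromatic symmetric functions and Schur functions, as monomial-coefficient
functions.  A formal power series of bounded degree in the commuting variables
`x_0, x_1, x_2, …` is recorded by the map sending an exponent vector `μ : ℕ → ℕ`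
(only finitely many nonzero entries ever matter) to the coefficient of the monomial
`∏ i, x_i ^ μ i`.  Colors / tableau entries are positive integers, so the variable
`x_0` is never used. -/

/-- A proper coloring of `G` by positive integers. -/
def IsProperColoring {V : Type*} (G : SimpleGraph V) (f : V → ℕ) : Prop :=
  (∀ v, 0 < f v) ∧ ∀ u v, G.Adj u v → f u ≠ f v

/-- The coefficient of the monomial `∏ i, x_i ^ μ i` in the chromatic symmetric
function `X_G = ∑_{proper colorings f} ∏_{v} x_{f v}`. -/
noncomputable def XCoeff {V : Type*} [Fintype V] (G : SimpleGraph V) (μ : ℕ → ℕ) : ℚ :=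
  Nat.card {f : V → ℕ //
    IsProperColoring G f ∧ ∀ i, Nat.card {v : V // f v = i} = μ i}

/-- A semistandard Young tableau of shape `lam`: positive entries on the diagram
(normalized to `0` off the diagram), weakly increasing along rows, strictly
increasing down columns. -/
def IsSSYT {N : ℕ} (lam : Nat.Partition N) (t : Cell → ℕ) : Prop :=
  (∀ c, c ∉ diag lam → t c = 0) ∧ (∀ c ∈ diag lam, 0 < t c) ∧
  (∀ i j : ℕ, ((i, j + 1) : Cell) ∈ diag lam → t (i, j) ≤ t (i, j + 1)) ∧
  (∀ i j : ℕ, ((i + 1, j) : Cell) ∈ diag lam → t (i, j) < t (i + 1, j))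

/-- The coefficient of the monomial `∏ i, x_i ^ μ i` in the Schur function `s_lam`,
i.e. the number of SSYT of shape `lam` and weight `μ`. -/
noncomputable def schurFn {N : ℕ} (lam : Nat.Partition N) (μ : ℕ → ℕ) : ℚ :=
  Nat.card {t : Cell → ℕ // IsSSYT lam t ∧
    ∀ i, Nat.card {c : Cell // c ∈ diag lam ∧ t c = i} = μ i}

/-- The coefficient `[s_lam] f` of the Schur function `s_lam` in the (unique, when it
exists) expansion `f = ∑_{ν ⊢ N} c_ν s_ν` of a symmetric function `f`, homogeneous of
degree `N`, given by its monomial coefficients. -/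
noncomputable def sCoeff {N : ℕ} (f : (ℕ → ℕ) → ℚ) (lam : Nat.Partition N) : ℚ :=
  if h : ∃ c : Nat.Partition N →₀ ℚ, ∀ μ, f μ = c.sum fun ν a => a * schurFn ν μ
  then h.choose lam else 0

/-! ### Graphs: generalized nets, generalized spiders, disjoint unions -/

/-- The generalized net `GN_{n,m}`: the complete graph on the body `Fin n`, with a
pendant (`Sum.inr j`) attached to the anchor `Sum.inl j` for each `j : Fin m`. -/
def genNet (n m : ℕ) : SimpleGraph (Fin n ⊕ Fin m) :=
  SimpleGraph.fromRel fun a b =>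
    match a, b with
    | Sum.inl _, Sum.inl _ => True
    | Sum.inl i, Sum.inr j => (i : ℕ) = (j : ℕ)
    | Sum.inr _, _ => False

/-- The generalized spider `GS_{n,(2,1^{m-1})}`: the complete graph on the body
`Fin n`, a pendant `Sum.inr (Sum.inl j)` attached to the body vertex `Sum.inl j` for
each `j : Fin m`, and one extra vertex `Sum.inr (Sum.inr 0)` (the special pendant)
attached to the pendant `Sum.inr (Sum.inl 0)`, so that the body vertex `0` (the
special anchor) carries an attached path on two vertices. -/
def genSpider2 (n m : ℕ) : SimpleGraph (Fin n ⊕ (Fin m ⊕ Fin 1)) :=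
  SimpleGraph.fromRel fun a b =>
    match a, b with
    | Sum.inl _, Sum.inl _ => True
    | Sum.inl i, Sum.inr (Sum.inl j) => (i : ℕ) = (j : ℕ)
    | Sum.inr (Sum.inl j), Sum.inr (Sum.inr _) => (j : ℕ) = 0
    | _, _ => False

/-- Disjoint union of two simple graphs. -/
def disjUnion {α β : Type*} (G : SimpleGraph α) (H : SimpleGraph β) :
    SimpleGraph (α ⊕ β) :=
  SimpleGraph.fromRel fun a b =>
    match a, b with
    | Sum.inl a, Sum.inl b => G.Adj a b
    | Sum.inr a, Sum.inr b => H.Adj a b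
    | _, _ => False

/-- The one-vertex graph `K_1`. -/
def K1 : SimpleGraph (Fin 1) := ⊥

/-- The path (= complete graph) on two vertices `P_2`. -/
def P2 : SimpleGraph (Fin 2) := ⊤

/-! ### Operations on partitions -/

/-- `removeOnes lam t` is the partition `lam ∖ 1^t` obtained by deleting `t` parts
equal to `1` from `lam` (junk value if `lam` has fewer than `t` parts equal to `1`). -/
def removeOnes {N : ℕ} (lam : Nat.Partition N) (t : ℕ) : Nat.Partition (N - t) :=
  if h : Multiset.replicate t 1 ≤ lam.parts then
    { parts := lam.parts - Multiset.replicate t 1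
      parts_pos := fun hx =>
        lam.parts_pos (Multiset.mem_of_le (tsub_le_self) hx)
      parts_sum := by
        have h1 : (lam.parts - Multiset.replicate t 1) + Multiset.replicate t 1
            = lam.parts := tsub_add_cancel_of_le h
        have h2 := congrArg Multiset.sum h1
        rw [Multiset.sum_add, Multiset.sum_replicate, lam.parts_sum] at h2
        simp only [smul_eq_mul, mul_one] at h2
        omega }
  else Nat.Partition.indiscrete (N - t)

/-- The partition `(2^a, 1^b)` of `2*a + b`. -/
def twoOne (a b : ℕ) : Nat.Partition (2 * a + b) where
  parts := Multiset.replicate a 2 + Multiset.replicate b 1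
  parts_pos := by
    intro i hi
    rw [Multiset.mem_add] at hi
    rcases hi with hi | hi <;> · rw [Multiset.eq_of_mem_replicate hi]; omega
  parts_sum := by
    rw [Multiset.sum_add, Multiset.sum_replicate, Multiset.sum_replicate]
    simp only [smul_eq_mul, mul_one]
    omega

/-! ### Special rim hook `G`-tabloids -/

/-- Two cells are adjacent if they share an edge. -/
def cellAdj (c d : Cell) : Prop :=
  (c.1 = d.1 ∧ (c.2 + 1 = d.2 ∨ d.2 + 1 = c.2)) ∨
  (c.2 = d.2 ∧ (c.1 + 1 = d.1 ∨ d.1 + 1 = c.1))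

/-- A set of cells is (the diagram of) a Young diagram if it is closed under
decreasing either coordinate. -/
def IsYoungDiag (D : Set Cell) : Prop :=
  ∀ i j i' j' : ℕ, ((i, j) : Cell) ∈ D → i' ≤ i → j' ≤ j → ((i', j') : Cell) ∈ D

/-- A set of cells is connected (via edge-adjacency, within the set). -/
def CellConnected (S : Set Cell) : Prop :=
  ∀ c ∈ S, ∀ d ∈ S, Relation.ReflTransGen (fun a b => a ∈ S ∧ b ∈ S ∧ cellAdj a b) c d

/-- A border strip (= rim hook, as a set of cells): nonempty, connected, and
containing no 2×2 square of cells. -/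
def IsBorderStrip (H : Set Cell) : Prop :=
  H.Nonempty ∧ CellConnected H ∧
    ∀ i j : ℕ, ¬(((i, j) : Cell) ∈ H ∧ ((i + 1, j) : Cell) ∈ H ∧
      ((i, j + 1) : Cell) ∈ H ∧ ((i + 1, j + 1) : Cell) ∈ H)

/-- `H` is a rim hook of the Young diagram `D`: a border strip contained in `D`
whose removal leaves a Young diagram. -/
def IsRimHookOf (D H : Set Cell) : Prop :=
  H ⊆ D ∧ IsBorderStrip H ∧ IsYoungDiag (D \ H)

/-- `IsRemovalSeq L D` says that the sets of cells in the list `L` may be removed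
successively from the diagram `D`, each being a rim hook of what remains, with
nothing left at the end. -/
def IsRemovalSeq : List (Set Cell) → Set Cell → Prop
  | [], D => D = ∅
  | H :: L, D => IsRimHookOf D H ∧ IsRemovalSeq L (D \ H)

/-- A special rim hook `G`-tabloid of shape `lam`, with respect to an order `r` on
the vertices of `G`: the cells of the diagram of `lam` are filled bijectively with
the vertices of `G` (vertex `v` goes in cell `pos v`), and the diagram is tiled by
rim hooks, successively removable, each meeting the first column.  The rim hooks are
recorded by the labelling `hk`, which assigns to each vertex the topmost row in which
its rim hook meets the first column.  The vertices in each rim hook form a stable set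
of `G` and, read from the rim hook's (bottom) cell in the first column — i.e. in
increasing order of the diagonal index `column − row` — they increase with respect
to `r`. -/
structure SRHGTabloid {V : Type*} (G : SimpleGraph V) (r : V → V → Prop)
    {N : ℕ} (lam : Nat.Partition N) where
  /-- the cell occupied by each vertex -/
  pos : V → Cell
  /-- the label of the rim hook containing each vertex: the topmost row in which
  that rim hook meets the first column -/
  hk : V → ℕ
  pos_inj : Function.Injective pos
  pos_range : Set.range pos = diag lam
  hk_mem : ∀ v, ((hk v, 0) : Cell) ∈ pos '' {u | hk u = hk v}
  hk_min : ∀ v i, ((i, 0) : Cell) ∈ pos '' {u | hk u = hk v} → hk v ≤ i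
  removal : ∃ L : List ℕ, L.Nodup ∧ (∀ i, i ∈ L ↔ ∃ v, hk v = i) ∧
    IsRemovalSeq (L.map fun i => pos '' {u | hk u = i}) (diag lam)
  stable : ∀ u v, hk u = hk v → u ≠ v → ¬G.Adj u v
  increasing : ∀ u v, hk u = hk v →
    ((pos u).2 : ℤ) - ((pos u).1 : ℤ) < ((pos v).2 : ℤ) - ((pos v).1 : ℤ) → r u v

/-- The sign of a special rim hook `G`-tabloid: `(-1)` to the total number of north
steps, where a rim hook spanning `k` rows contributes `k - 1` north steps. -/
noncomputable def tabSign {V : Type*} {G : SimpleGraph V} {r : V → V → Prop}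
    {N : ℕ} {lam : Nat.Partition N} (T : SRHGTabloid G r lam) : ℤ :=
  (-1) ^ ∑ i ∈ Finset.range N,
    ({a : ℕ | ∃ v, T.hk v = i ∧ (T.pos v).1 = a}.ncard - 1)

/-- The cells of the head of a tabloid of shape `lam`: the rows of length `≥ 2`. -/
def headCells {N : ℕ} (lam : Nat.Partition N) : Set Cell :=
  {c : Cell | c ∈ diag lam ∧ 2 ≤ rowLen lam c.1}

/-- The cells of the tail of a tabloid of shape `lam`: the rows of length `1`. -/
def tailCells {N : ℕ} (lam : Nat.Partition N) : Set Cell :=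
  {c : Cell | c ∈ diag lam ∧ rowLen lam c.1 = 1}

/-- Two special rim hook `G`-tabloids have the same head: the same cells of the head
are occupied by the same vertices, and the rim hook structure restricted to the head
agrees. -/
def SameHead {V : Type*} {G : SimpleGraph V} {r : V → V → Prop} {N : ℕ}
    {lam : Nat.Partition N} (T T' : SRHGTabloid G r lam) : Prop :=
  (∀ v, T.pos v ∈ headCells lam ↔ T'.pos v ∈ headCells lam) ∧
  (∀ v, T.pos v ∈ headCells lam → T.pos v = T'.pos v) ∧
  (∀ u v, T.pos u ∈ headCells lam → T.pos v ∈ headCells lam →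
    (T.hk u = T.hk v ↔ T'.hk u = T'.hk v))

/-! ## Kostka numbers through interlacing sequences -/

/-- Shapes interlacing `a`. -/
noncomputable def inter (a : ℕ →₀ ℕ) : Finset (ℕ →₀ ℕ) :=
  (Finset.Icc 0 a).filter fun b => ∀ i, a (i + 1) ≤ b i

lemma mem_inter {a b : ℕ →₀ ℕ} : b ∈ inter a ↔ (∀ i, b i ≤ a i) ∧ ∀ i, a (i + 1) ≤ b i := by
  simp [inter, Finsupp.le_def]

/-- Kostka numbers; the head of the list is the multiplicity of the largest letter. -/
noncomputable def KK : List ℕ → (ℕ →₀ ℕ) → ℚ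
  | [], a => if a = 0 then 1 else 0
  | m :: w, a => ∑ b ∈ inter a, if a.degree = b.degree + m then KK w b else 0

lemma degree_eq_range (a : ℕ →₀ ℕ) (n : ℕ) (h : ∀ i, n ≤ i → a i = 0) :
    a.degree = ∑ i ∈ Finset.range n, a i := by
  rw [Finsupp.degree_apply]
  apply Finset.sum_subset
  · intro i hi
    by_contra hc
    simp at hi hc
    exact hi (h i hc)
  · intro i _ hi
    simpa using hi

lemma exists_bound (a : ℕ →₀ ℕ) : ∃ n, ∀ i, n ≤ i → a i = 0 := by
  refine ⟨a.support.sup id + 1, fun i hi => ?_⟩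
  by_contra hc
  have : i ∈ a.support := by simpa using hc
  have := Finset.le_sup (f := id) this
  simp at this
  omega

lemma KK_cons_ne {m : ℕ} {w : List ℕ} {a : ℕ →₀ ℕ} (h : KK (m :: w) a ≠ 0) :
    ∃ b ∈ inter a, a.degree = b.degree + m ∧ KK w b ≠ 0 := by
  rw [KK] at h
  obtain ⟨b, hb, h2⟩ := Finset.exists_ne_zero_of_sum_ne_zero h
  by_cases hd : a.degree = b.degree + m
  · exact ⟨b, hb, hd, by simpa [hd] using h2⟩
  · simp [hd] at h2

lemma KK_supp (w : List ℕ) : ∀ a : ℕ →₀ ℕ, KK w a ≠ 0 → ∀ i, w.length ≤ i → a i = 0 := by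
  induction w with
  | nil =>
    intro a h i _
    rw [KK] at h
    by_cases ha : a = 0
    · simp [ha]
    · simp [ha] at h
  | cons m w ih =>
    intro a h i hi
    obtain ⟨b, hb, -, h2⟩ := KK_cons_ne h
    rw [mem_inter] at hb
    simp at hi
    obtain ⟨j, rfl⟩ : ∃ j, i = j + 1 := ⟨i - 1, by omega⟩
    have := ih b h2 j (by omega)
    have := hb.2 j
    omega

lemma KK_degree (w : List ℕ) : ∀ a : ℕ →₀ ℕ, KK w a ≠ 0 → a.degree = w.sum := by
  induction w with
  | nil =>
    intro a h
    rw [KK] at h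
    by_cases ha : a = 0
    · simp [ha]
    · simp [ha] at h
  | cons m w ih =>
    intro a h
    obtain ⟨b, hb, hd, h2⟩ := KK_cons_ne h
    rw [hd, ih b h2, List.sum_cons]
    omega

/-- Multiplicity of letter `i+1`. -/
def rowsOf (w : List ℕ) (i : ℕ) : ℕ := w.reverse.getD i 0

lemma rowsOf_cons (m : ℕ) (w : List ℕ) (i : ℕ) :
    rowsOf (m :: w) i = if i = w.length then m else rowsOf w i := by
  unfold rowsOf
  simp only [List.reverse_cons, List.getD_eq_getElem?_getD, List.getElem?_append,
    List.length_reverse]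
  split_ifs with h1 h2 h2
  · omega
  · rfl
  · subst h2; simp
  · have h3 : i - w.length ≠ 0 := by omega
    rw [List.getElem?_eq_none (by simp; omega), List.getElem?_eq_none (by simp; omega)]

lemma rowsOf_ge (w : List ℕ) (i : ℕ) (h : w.length ≤ i) : rowsOf w i = 0 := by
  unfold rowsOf
  rw [List.getD_eq_getElem?_getD, List.getElem?_eq_none (by simpa using h)]
  rfl

lemma sum_rowsOf (w : List ℕ) : ∀ n, w.length ≤ n → ∑ i ∈ Finset.range n, rowsOf w i = w.sum := by
  induction w with
  | nil => intro n _; apply Finset.sum_eq_zero; intro i _; exact rowsOf_ge _ _ (by simp)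
  | cons m w ih =>
    intro n hn
    simp at hn
    have : ∑ i ∈ Finset.range n, rowsOf (m :: w) i
        = ∑ i ∈ Finset.range n, ((if i = w.length then m else 0) + rowsOf w i) := by
      apply Finset.sum_congr rfl
      intro i _
      rw [rowsOf_cons]
      split_ifs with h
      · rw [rowsOf_ge w i (by omega)]; rfl
      · simp
    rw [this, Finset.sum_add_distrib, ih n (by omega)]
    simp
    intro; omega

lemma KK_dom (w : List ℕ) : ∀ a : ℕ →₀ ℕ, KK w a ≠ 0 → ∀ j,
    ∑ i ∈ Finset.range j, rowsOf w i ≤ ∑ i ∈ Finset.range j, a i := by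
  induction w with
  | nil => 
    intro a _ j
    rw [Finset.sum_eq_zero]
    · simp
    · intro i _; exact rowsOf_ge _ _ (by simp)
  | cons m w ih =>
    intro a h j
    by_cases hj : j ≤ w.length
    · obtain ⟨b, hb, hd, h2⟩ := KK_cons_ne h
      calc _ = ∑ i ∈ Finset.range j, rowsOf w i := by
            apply Finset.sum_congr rfl
            intro i hi
            simp at hi
            rw [rowsOf_cons, if_neg (by omega)]
        _ ≤ _ := ih b h2 j
        _ ≤ _ := Finset.sum_le_sum fun i _ => (mem_inter.1 hb).1 i
    · rw [sum_rowsOf _ _ (by simp; omega), ← KK_degree _ a h, degree_eq_range a j]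
      intro i hi
      exact KK_supp _ a h i (by simp; omega)

noncomputable def rowsF (w : List ℕ) : ℕ →₀ ℕ :=
  Finsupp.onFinset (Finset.range w.length) (rowsOf w) (by
    intro i hi
    by_contra hc
    simp at hc
    exact hi (rowsOf_ge _ _ hc))

@[simp] lemma rowsF_apply (w : List ℕ) (i : ℕ) : rowsF w i = rowsOf w i := rfl

lemma eq_of_psum (f g : ℕ → ℕ) (n : ℕ)
    (h : ∀ j ≤ n, ∑ i ∈ Finset.range j, f i = ∑ i ∈ Finset.range j, g i) : ∀ i < n, f i = g i := by
  intro i hi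
  have h1 := h (i + 1) hi
  have h2 := h i hi.le
  rw [Finset.sum_range_succ, Finset.sum_range_succ, h2] at h1
  omega

lemma rowsF_degree (w : List ℕ) : (rowsF w).degree = w.sum := by
  rw [degree_eq_range _ w.length (fun i hi => rowsOf_ge _ _ hi)]
  exact sum_rowsOf _ _ le_rfl

lemma KK_self (w : List ℕ) (hw : Antitone (rowsOf w)) : KK w (rowsF w) = 1 := by
  induction w with
  | nil =>
    rw [KK, if_pos]
    ext i
    exact rowsOf_ge [] i (by simp)
  | cons m w ih =>
    rw [KK]
    have hw' : Antitone (rowsOf w) := by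
      apply antitone_nat_of_succ_le
      intro i
      have := hw (Nat.le_succ i)
      rw [Nat.succ_eq_add_one, rowsOf_cons, rowsOf_cons] at this
      by_cases h : w.length ≤ i + 1
      · rw [rowsOf_ge w (i+1) h]; simp
      · rwa [if_neg (by omega), if_neg (by omega)] at this
    rw [Finset.sum_eq_single (rowsF w)]
    · rw [if_pos, ih hw']
      rw [rowsF_degree, rowsF_degree, List.sum_cons, add_comm]
    · intro b hb hne
      by_contra hc
      have hd : (rowsF (m :: w)).degree = b.degree + m := by
        by_contra h; simp [h] at hc
      rw [if_pos hd] at hc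
      apply hne
      have h1 := KK_dom w b hc
      have h2 := KK_supp w b hc
      have h3 := eq_of_psum (b) (rowsOf w) w.length (by
        intro j hj
        apply le_antisymm _ (h1 j)
        calc _ ≤ ∑ i ∈ Finset.range j, rowsF (m :: w) i :=
                Finset.sum_le_sum fun i _ => (mem_inter.1 hb).1 i
          _ = _ := by
            apply Finset.sum_congr rfl
            intro i hi
            simp at hi
            rw [rowsF_apply, rowsOf_cons, if_neg (by omega)])
      ext i
      by_cases hi : i < w.length
      · exact h3 i hi
      · rw [h2 i (by omega), rowsF_apply, rowsOf_ge w i (by omega)]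
    · intro h
      exfalso
      apply h
      rw [mem_inter]
      constructor
      · intro i
        rw [rowsF_apply, rowsF_apply, rowsOf_cons]
        split_ifs with hi
        · rw [rowsOf_ge w i (by omega)]; simp
        · rfl
      · intro i
        have h5 := hw (Nat.le_succ i)
        rw [rowsF_apply, rowsF_apply]
        by_cases hi : i = w.length
        · rw [rowsOf_ge (m :: w) (i+1) (by simp; omega)]; simp
        · rw [rowsOf_cons m w i, if_neg hi] at h5
          exact h5

/-- Column indicator. -/
noncomputable def ones (n : ℕ) : ℕ →₀ ℕ :=
  Finsupp.onFinset (Finset.range n) (fun i => if i < n then 1 else 0) (by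
    intro i hi; simp at hi; simpa using hi)

lemma ones_apply (n i : ℕ) : ones n i = if i < n then 1 else 0 := rfl

lemma ones_degree (n : ℕ) : (ones n).degree = n := by
  rw [degree_eq_range _ n (fun i hi => by rw [ones_apply, if_neg (by omega)])]
  rw [Finset.sum_congr rfl (g := fun _ => 1)]
  · simp
  · intro i hi
    simp at hi
    rw [ones_apply, if_pos hi]

lemma KK_zero_cons (w : List ℕ) (a : ℕ →₀ ℕ) (ha : Antitone a) : KK (0 :: w) a = KK w a := by
  rw [KK, Finset.sum_eq_single a]
  · simp
  · intro b hb hne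
    rw [if_neg]
    intro hd
    apply hne
    obtain ⟨n, hn⟩ := exists_bound a
    have hb1 := (mem_inter.1 hb).1
    have hbn : ∀ i, n ≤ i → b i = 0 := fun i hi => by
      have := hn i hi
      have := hb1 i
      omega
    rw [degree_eq_range a n hn, degree_eq_range b n hbn, add_zero] at hd
    have := (Finset.sum_eq_sum_iff_of_le (fun i _ => hb1 i)).1 hd.symm
    ext i
    by_cases hi : i < n
    · exact this i (by simpa using hi)
    · rw [hn i (by omega), hbn i (by omega)]
  · intro h
    exfalso
    apply h
    rw [mem_inter]
    exact ⟨fun i => le_rfl, fun i => ha (Nat.le_succ i)⟩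

lemma KK_zeros (z : ℕ) (w : List ℕ) (a : ℕ →₀ ℕ) (ha : Antitone a) :
    KK (List.replicate z 0 ++ w) a = KK w a := by
  induction z with
  | zero => rfl
  | succ z ih => rw [List.replicate_succ, List.cons_append, KK_zero_cons _ _ ha, ih]

lemma KK_column (w : List ℕ) : ∀ a : ℕ →₀ ℕ, KK (w.map (· + 1)) (ones w.length + a) = KK w a := by
  induction w with
  | nil =>
    intro a
    have : ones 0 = 0 := by ext i; simp [ones_apply]
    simp [this]
  | cons m w ih =>
    intro a
    rw [List.map_cons, KK, KK]
    symm
    apply Finset.sum_of_injOn (fun b => ones w.length + b)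
    · intro b _ c _ h
      exact add_left_cancel h
    · intro b hb
      rw [Finset.mem_coe, mem_inter] at hb ⊢
      obtain ⟨h1, h2⟩ := hb
      constructor <;> intro i
      · have := h1 i
        simp only [Finsupp.add_apply, ones_apply, List.length_cons]
        split_ifs <;> omega
      · have := h2 i
        simp only [Finsupp.add_apply, ones_apply, List.length_cons]
        split_ifs <;> omega
    · intro b hb hni
      by_contra hc
      have hK : KK (w.map (· + 1)) b ≠ 0 := by
        intro h; simp [h] at hc
      apply hni
      rw [mem_inter] at hb
      obtain ⟨h1, h2⟩ := hb
      have h3 := KK_supp _ _ hK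
      simp at h3
      refine ⟨b - ones w.length, ?_, ?_⟩
      · rw [Finset.mem_coe, mem_inter]
        constructor <;> intro i
        · have h4 := h1 i
          have h5 := h3 i
          simp only [Finsupp.add_apply, ones_apply, List.length_cons, Finsupp.tsub_apply] at h4 ⊢
          split_ifs at h4 ⊢ <;> omega
        · have h4 := h2 i
          have h5 := h3 i
          simp only [Finsupp.add_apply, ones_apply, List.length_cons, Finsupp.tsub_apply] at h4 ⊢
          split_ifs at h4 ⊢ <;> omega
      · ext i
        have h4 := h2 i
        simp only [Finsupp.add_apply, ones_apply, List.length_cons, Finsupp.tsub_apply] at h4 ⊢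
        split_ifs at h4 ⊢ <;> omega
    · intro b hb
      rw [ih b]
      have : (a.degree = b.degree + m) ↔
        ((ones (m :: w).length + a).degree = (ones w.length + b).degree + (m + 1)) := by
        rw [map_add, map_add, ones_degree, ones_degree, List.length_cons]
        omega
      simp only [this]

/-- Lower and upper bounds for the middle shape. -/
def loB (a c : ℕ →₀ ℕ) (i : ℕ) : ℕ := max (a (i + 1)) (c i)
def hiB (a c : ℕ →₀ ℕ) : ℕ → ℕ
  | 0 => a 0
  | i + 1 => min (a (i + 1)) (c i)

lemma sum_lo_hi (a c : ℕ →₀ ℕ) (n : ℕ) :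
    ∑ i ∈ Finset.range (n + 1), (loB a c i + hiB a c i) + min (a (n + 1)) (c n) =
      ∑ i ∈ Finset.range (n + 2), a i + ∑ i ∈ Finset.range (n + 1), c i := by
  induction n with
  | zero =>
    simp [Finset.sum_range_succ, loB, hiB]
    omega
  | succ n ih =>
    rw [Finset.sum_range_succ, show n + 1 + 2 = (n + 1 + 1) + 1 from rfl,
      Finset.sum_range_succ (fun i => a i) (n + 1 + 1),
      Finset.sum_range_succ (fun i => c i)]
    rw [show n + 2 = n + 1 + 1 from rfl] at ih
    simp only [loB, hiB] at ih ⊢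
    omega

lemma mid_iff (a b c : ℕ →₀ ℕ) :
    (b ∈ inter a ∧ c ∈ inter b) ↔ ((∀ i, loB a c i ≤ b i) ∧ ∀ i, b i ≤ hiB a c i) := by
  rw [mem_inter, mem_inter]
  constructor
  · rintro ⟨⟨h1, h2⟩, h3, h4⟩
    refine ⟨fun i => max_le (h2 i) (h3 i), fun i => ?_⟩
    cases i with
    | zero => exact h1 0
    | succ i => exact le_min (h1 _) (h4 i)
  · rintro ⟨h1, h2⟩
    refine ⟨⟨fun i => ?_, fun i => (le_max_left _ _).trans (h1 i)⟩,
      fun i => (le_max_right _ _).trans (h1 i), fun i => (h2 (i + 1)).trans (min_le_right _ _)⟩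
    cases i with
    | zero => exact h2 0
    | succ i => exact (h2 (i + 1)).trans (min_le_left _ _)

noncomputable def reflB (a c b : ℕ →₀ ℕ) : ℕ →₀ ℕ :=
  Finsupp.onFinset (a.support ∪ c.support ∪ (Finset.image (· - 1) a.support))
    (fun i => loB a c i + hiB a c i - b i) (by
    intro i hi
    by_contra hc
    simp only [Finset.mem_union, Finsupp.mem_support_iff, Finset.mem_image, not_or, not_exists,
      not_and, not_not] at hc
    apply hi
    have h1 : a (i + 1) = 0 := by
      by_contra h
      exact hc.2 (i + 1) h (by simp)
    have h2 : hiB a c i = 0 := by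
      cases i with
      | zero => exact hc.1.1
      | succ i => simp [hiB, hc.1.1]
    simp [loB, h1, h2, hc.1.2])

lemma reflB_apply (a c b : ℕ →₀ ℕ) (i : ℕ) : reflB a c b i = loB a c i + hiB a c i - b i := rfl

lemma reflB_degree (a b c : ℕ →₀ ℕ) (h : b ∈ inter a ∧ c ∈ inter b) :
    b.degree + (reflB a c b).degree = a.degree + c.degree := by
  obtain ⟨n1, h1⟩ := exists_bound a
  obtain ⟨n2, h2⟩ := exists_bound b
  obtain ⟨n3, h3⟩ := exists_bound c
  obtain ⟨n4, h4⟩ := exists_bound (reflB a c b)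
  set n := n1 + n2 + n3 + n4
  rw [degree_eq_range a (n + 2) (fun i hi => h1 i (by omega)),
    degree_eq_range b (n + 1) (fun i hi => h2 i (by omega)),
    degree_eq_range c (n + 1) (fun i hi => h3 i (by omega)),
    degree_eq_range _ (n + 1) (fun i hi => h4 i (by omega)), ← sum_lo_hi a c n,
    h3 n (by omega), ← Finset.sum_add_distrib]
  simp only [Nat.min_zero, add_zero]
  apply Finset.sum_congr rfl
  intro i _
  rw [mid_iff] at h
  rw [reflB_apply]
  have := h.1 i
  have := h.2 i
  omega

lemma KK_swap_le (x y : ℕ) (w : List ℕ) (a : ℕ →₀ ℕ) : KK (x :: y :: w) a = KK (y :: x :: w) a := by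
  have key : ∀ x y : ℕ, KK (x :: y :: w) a =
      ∑ p ∈ (inter a).sigma (fun b => inter b),
        if a.degree = p.1.degree + x ∧ p.1.degree = p.2.degree + y then KK w p.2 else 0 := by
    intro x y
    rw [KK, Finset.sum_sigma]
    apply Finset.sum_congr rfl
    intro b _
    rw [KK]
    split_ifs with h
    · apply Finset.sum_congr rfl
      intro c _
      simp [h]
    · rw [Finset.sum_eq_zero]
      intro c _
      rw [if_neg]
      exact fun hh => h hh.1
  rw [key, key]
  have hinv : ∀ p ∈ (inter a).sigma (fun b => inter b),
      (⟨reflB a p.2 p.1, p.2⟩ : (_ : ℕ →₀ ℕ) × (ℕ →₀ ℕ)) ∈ (inter a).sigma (fun b => inter b) := by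
    rintro ⟨b, c⟩ hp
    rw [Finset.mem_sigma] at hp ⊢
    rw [mid_iff] at hp ⊢
    constructor <;> intro i
    · rw [reflB_apply]
      have := hp.1 i
      have := hp.2 i
      dsimp only at *
      omega
    · rw [reflB_apply]
      have := hp.1 i
      have := hp.2 i
      dsimp only at *
      omega
  have hinv2 : ∀ p ∈ (inter a).sigma (fun b => inter b),
      (⟨reflB a p.2 (reflB a p.2 p.1), p.2⟩ : (_ : ℕ →₀ ℕ) × (ℕ →₀ ℕ)) = p := by
    rintro ⟨b, c⟩ hp
    rw [Finset.mem_sigma, mid_iff] at hp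
    have : reflB a c (reflB a c b) = b := by
      ext i
      rw [reflB_apply, reflB_apply]
      have := hp.1 i
      have := hp.2 i
      dsimp only at *
      omega
    dsimp only
    rw [this]
  apply Finset.sum_nbij' (fun p => ⟨reflB a p.2 p.1, p.2⟩) (fun p => ⟨reflB a p.2 p.1, p.2⟩)
    hinv hinv hinv2 hinv2
  rintro ⟨b, c⟩ hp
  rw [Finset.mem_sigma] at hp
  have := reflB_degree a b c hp
  dsimp only
  congr 1
  apply propext
  omega

lemma KK_perm {w w' : List ℕ} (h : w.Perm w') : ∀ a, KK w a = KK w' a := by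
  induction h with
  | nil => intro a; rfl
  | cons x _ ih =>
    intro a
    rw [KK, KK]
    apply Finset.sum_congr rfl
    intro b _
    rw [ih b]
  | swap x y l => intro a; exact KK_swap_le _ _ _ _
  | trans _ _ ih1 ih2 => intro a; rw [ih1, ih2]

/-! ## The signed composition functional -/

/-- Signed sum of `g` over all compositions of `k`. -/
noncomputable def AA : ℕ → (List ℕ → ℚ) → ℚ
  | 0, g => g []
  | k + 1, g => ∑ j : Fin (k + 1), (-1) ^ (j : ℕ) * AA (k - j) (fun w => g ((j + 1) :: w))
  termination_by k => k
  decreasing_by omega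

lemma AA_zero (g : List ℕ → ℚ) : AA 0 g = g [] := by rw [AA]

lemma AA_succ (k : ℕ) (g : List ℕ → ℚ) : AA (k + 1) g =
    ∑ j ∈ Finset.range (k + 1), (-1) ^ j * AA (k - j) (fun w => g ((j + 1) :: w)) := by
  rw [AA, Finset.sum_range]

lemma AA_congr (k : ℕ) : ∀ g g' : List ℕ → ℚ,
    (∀ w, (∀ x ∈ w, 0 < x) → w.sum = k → g w = g' w) → AA k g = AA k g' := by
  induction k using Nat.strong_induction_on with
  | _ k ih =>
    intro g g' h
    cases k with
    | zero => rw [AA_zero, AA_zero]; exact h [] (by simp) (by simp)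
    | succ k =>
      rw [AA_succ, AA_succ]
      apply Finset.sum_congr rfl
      intro j hj
      simp at hj
      congr 1
      apply ih (k - j) (by omega)
      intro w hw hs
      apply h
      · simpa using hw
      · simp [hs]; omega

lemma AA_add (k : ℕ) : ∀ g g' : List ℕ → ℚ, AA k (fun w => g w + g' w) = AA k g + AA k g' := by
  induction k using Nat.strong_induction_on with
  | _ k ih =>
    intro g g'
    cases k with
    | zero => simp [AA_zero]
    | succ k =>
      rw [AA_succ, AA_succ, AA_succ, ← Finset.sum_add_distrib]
      apply Finset.sum_congr rfl
      intro j hj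
      rw [ih (k - j) (by omega), mul_add]

lemma AA_smul (k : ℕ) : ∀ (c : ℚ) (g : List ℕ → ℚ), AA k (fun w => c * g w) = c * AA k g := by
  induction k using Nat.strong_induction_on with
  | _ k ih =>
    intro c g
    cases k with
    | zero => simp [AA_zero]
    | succ k =>
      rw [AA_succ, AA_succ, Finset.mul_sum]
      apply Finset.sum_congr rfl
      intro j hj
      rw [ih (k - j) (by omega)]
      ring

lemma AA_const_zero (k : ℕ) : AA k (fun _ => 0) = 0 := by
  have := AA_smul k 0 (fun _ => 0)
  simpa using this

lemma AA_sum {ι : Type*} (k : ℕ) (s : Finset ι) (g : ι → List ℕ → ℚ) :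
    AA k (fun w => ∑ i ∈ s, g i w) = ∑ i ∈ s, AA k (g i) := by
  induction s using Finset.induction_on with
  | empty => simp [AA_const_zero]
  | insert i s hi ih =>
    simp only [Finset.sum_insert hi]
    rw [AA_add, ih]

/-- Derivation on functions of lists, dual to multiplication by `p_1`. -/
def DD (g : List ℕ → ℚ) (w : List ℕ) : ℚ :=
  ∑ i ∈ Finset.range w.length, g (w.modify i (· - 1))

lemma DD_nil (g : List ℕ → ℚ) : DD g [] = 0 := by simp [DD]

lemma DD_cons (g : List ℕ → ℚ) (x : ℕ) (w : List ℕ) :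
    DD g (x :: w) = g ((x - 1) :: w) + DD (fun v => g (x :: v)) w := by
  unfold DD
  rw [List.length_cons, Finset.sum_range_succ', add_comm]
  simp

lemma AA_DD (k : ℕ) : ∀ g : List ℕ → ℚ, (∀ u v, g (u ++ 0 :: v) = g (u ++ v)) →
    AA (k + 1) (DD g) = AA k g := by
  induction k using Nat.strong_induction_on with
  | _ k ih =>
    intro g hg
    rw [AA_succ]
    have h1 : ∀ j ∈ Finset.range (k + 1), (-1 : ℚ) ^ j * AA (k - j) (fun w => DD g ((j + 1) :: w))
        = (-1) ^ j * AA (k - j) (fun w => g (j :: w)) +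
          (-1) ^ j * AA (k - j) (DD fun v => g ((j + 1) :: v)) := by
      intro j _
      simp only [DD_cons]
      rw [AA_add, mul_add]
      rfl
    rw [Finset.sum_congr rfl h1, Finset.sum_add_distrib, Finset.sum_range_succ',
      Finset.sum_range_succ (fun j => (-1) ^ j * AA (k - j) (DD fun v => g ((j + 1) :: v)))]
    have h2 : (fun w => g (0 :: w)) = g := by
      funext w; exact hg [] w
    rw [h2, Nat.sub_self, AA_zero, DD_nil]
    have h3 : ∀ j ∈ Finset.range k,
        (-1 : ℚ) ^ (j + 1) * AA (k - (j + 1)) (fun w => g ((j + 1) :: w)) =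
        - ((-1) ^ j * AA (k - j) (DD fun v => g ((j + 1) :: v))) := by
      intro j hj
      simp at hj
      obtain ⟨d, hd⟩ : ∃ d, k - j = d + 1 := ⟨k - j - 1, by omega⟩
      rw [hd, ih d (by omega) (fun v => g ((j + 1) :: v)) (fun u v => hg ((j + 1) :: u) v),
        show k - (j + 1) = d by omega]
      ring
    rw [Finset.sum_congr rfl h3, Finset.sum_neg_distrib]
    simp

lemma sum_two {s : Finset ℕ} {f : ℕ → ℚ} {i j : ℕ} (hi : i ∈ s) (hj : j ∈ s) (hij : i ≠ j)
    (h : ∀ x ∈ s, x ≠ i → x ≠ j → f x = 0) : ∑ x ∈ s, f x = f i + f j := by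
  rw [← Finset.sum_pair hij]
  symm
  apply Finset.sum_subset
  · intro x hx; simp at hx; rcases hx with rfl | rfl <;> assumption
  · intro x hx hn
    simp at hn
    exact h x hx hn.1 hn.2

lemma hook_sum (a : ℕ →₀ ℕ) (k : ℕ) (ha : a.degree = k + 1) :
    ∑ i ∈ Finset.range (k + 1), (if ones i ∈ inter a then (-1 : ℚ) ^ (k - i) else 0) =
      if a = ones (k + 1) then 1 else 0 := by
  have hmem : ∀ i, ones i ∈ inter a ↔ (∀ r, r < i → 1 ≤ a r) ∧ (∀ r, 1 ≤ r → r ≤ i → a r ≤ 1) ∧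
      ∀ r, i < r → a r = 0 := by
    intro i
    rw [mem_inter]
    simp only [ones_apply]
    constructor
    · rintro ⟨h1, h2⟩
      refine ⟨fun r hr => ?_, fun r hr1 hr2 => ?_, fun r hr => ?_⟩
      · have := h1 r; rwa [if_pos hr] at this
      · have := h2 (r - 1); rwa [if_pos (by omega), show r - 1 + 1 = r by omega] at this
      · have := h2 (r - 1)
        rw [if_neg (by omega), show r - 1 + 1 = r by omega] at this; omega
    · rintro ⟨h1, h2, h3⟩
      refine ⟨fun r => ?_, fun r => ?_⟩
      · split_ifs with h
        · exact h1 r h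
        · simp
      · split_ifs with h
        · exact h2 _ (by omega) (by omega)
        · rw [h3 _ (by omega)]
  split_ifs with hc
  · rw [Finset.sum_eq_single k]
    · rw [if_pos, Nat.sub_self, pow_zero]
      rw [hmem, hc]
      simp only [ones_apply]
      refine ⟨fun r hr => by rw [if_pos (by omega)], fun r _ _ => by split_ifs <;> omega,
        fun r hr => by rw [if_neg (by omega)]⟩
    · intro i hi hne
      simp at hi
      rw [if_neg]
      rw [hmem, hc]
      rintro ⟨-, -, h⟩
      have := h k (by omega)
      rw [ones_apply, if_pos (by omega)] at this
      omega
    · simp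
  · by_cases hex : ∃ i, i ∈ Finset.range (k + 1) ∧ ones i ∈ inter a
    · -- pick the smaller index l, with a l ≠ 0 and a (l+1) = 0
      have : ∃ l, l + 1 < k + 1 ∧ a l ≠ 0 ∧ (∀ r, r < l → 1 ≤ a r) ∧
          (∀ r, 1 ≤ r → r ≤ l → a r ≤ 1) ∧ ∀ r, l < r → a r = 0 := by
        obtain ⟨i, hi, hi2⟩ := hex
        rw [hmem] at hi2
        simp at hi
        obtain ⟨h1, h2, h3⟩ := hi2
        by_cases hai : a i = 0
        · have hi0 : i ≠ 0 := by
            rintro rfl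
            have : a.degree = 0 := by
              rw [Finsupp.degree_eq_zero_iff]
              ext r
              rcases Nat.eq_zero_or_pos r with rfl | hr
              · exact hai
              · exact h3 r hr
            omega
          refine ⟨i - 1, by omega, ?_, fun r hr => h1 r (by omega),
            fun r hr1 hr2 => h2 r hr1 (by omega), fun r hr => ?_⟩
          · have := h1 (i - 1) (by omega); omega
          · by_cases hri : r = i
            · rw [hri, hai]
            · exact h3 r (by omega)
        · refine ⟨i, ?_, hai, h1, h2, h3⟩
          by_contra hik
          have hik : i = k := by omega
          subst hik
          apply hc
          have hd := degree_eq_range a (i + 1) (fun r hr => h3 r (by omega))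
          have hle : ∀ r ∈ Finset.range (i + 1), 1 ≤ a r := by
            intro r hr
            simp at hr
            by_cases hri : r = i
            · subst hri; omega
            · exact h1 r (by omega)
          have hs : ∑ r ∈ Finset.range (i + 1), 1 = ∑ r ∈ Finset.range (i + 1), a r := by
            rw [← hd, ha]; simp
          have := (Finset.sum_eq_sum_iff_of_le hle).1 hs
          ext r
          rw [ones_apply]
          split_ifs with hr
          · exact (this r (by simpa using hr)).symm
          · exact h3 r (by omega)
      obtain ⟨l, hl, h0, h1, h2, h3⟩ := this
      have hm1 : ones l ∈ inter a := (hmem l).2 ⟨h1, h2, h3⟩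
      have hm2 : ones (l + 1) ∈ inter a := by
        refine (hmem (l + 1)).2 ⟨fun r hr => ?_, fun r hr1 hr2 => ?_, fun r hr => h3 r (by omega)⟩
        · by_cases hri : r = l
          · subst hri; omega
          · exact h1 r (by omega)
        · by_cases hri : r = l + 1
          · rw [h3 r (by omega)]; simp
          · exact h2 r hr1 (by omega)
      rw [sum_two (i := l) (j := l + 1) (by simp; omega) (by simpa using hl) (by omega)]
      · rw [if_pos hm1, if_pos hm2, show k - l = (k - (l + 1)) + 1 by omega, pow_succ]
        ring
      · intro x _ hx1 hx2
        rw [if_neg]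
        rw [hmem]
        rintro ⟨g1, g2, g3⟩
        rcases lt_or_gt_of_ne hx1 with h | h
        · exact h0 (g3 l h)
        · have := g1 (l + 1) (by omega)
          rw [h3 (l + 1) (by omega)] at this
          omega
    · apply Finset.sum_eq_zero
      intro i hi
      rw [if_neg]
      exact fun h => hex ⟨i, hi, h⟩

lemma AA_KK (k : ℕ) : ∀ a : ℕ →₀ ℕ, a.degree = k →
    AA k (fun w => KK w a) = if a = ones k then 1 else 0 := by
  induction k using Nat.strong_induction_on with
  | _ k ih =>
    intro a ha
    cases k with
    | zero =>
      rw [AA_zero, KK]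
      have : ones 0 = 0 := by ext i; simp [ones_apply]
      rw [this]
    | succ k =>
      rw [AA_succ, ← hook_sum a k ha, ← Finset.sum_range_reflect]
      apply Finset.sum_congr rfl
      intro j hj
      simp at hj
      simp only [KK]
      rw [AA_sum, show k + 1 - 1 - j = k - j by omega, show k - (k - j) = j by omega,
        Finset.mul_sum]
      have : ∀ b ∈ inter a, (-1 : ℚ) ^ (k - j) *
          AA j (fun w => if a.degree = b.degree + (k - j + 1) then KK w b else 0) =
          if b = ones j then (-1) ^ (k - j) else 0 := by
        intro b _
        by_cases hb : a.degree = b.degree + (k - j + 1)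
        · simp only [if_pos hb]
          rw [ih j (by omega) b (by omega)]
          simp
        · simp only [if_neg hb]
          rw [AA_const_zero, if_neg, mul_zero]
          rintro rfl
          rw [ones_degree] at hb
          omega
      rw [Finset.sum_congr rfl this, Finset.sum_ite_eq']

/-! ## Tableaux are counted by Kostka numbers -/

/-- The exponent vector with multiplicities read off from a list. -/
def toW (w : List ℕ) : ℕ → ℕ
  | 0 => 0
  | i + 1 => rowsOf w i

lemma toW_cons (m : ℕ) (w : List ℕ) (i : ℕ) :
    toW (m :: w) i = toW w i + if i = w.length + 1 then m else 0 := by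
  cases i with
  | zero => simp [toW]
  | succ i =>
    simp only [toW, rowsOf_cons]
    by_cases h : i = w.length
    · rw [if_pos h, if_pos (by omega), rowsOf_ge _ _ (by omega), zero_add]
    · rw [if_neg h, if_neg (by omega), add_zero]

lemma toW_ge (w : List ℕ) (i : ℕ) (h : w.length < i) : toW w i = 0 := by
  cases i with
  | zero => rfl
  | succ i => exact rowsOf_ge _ _ (by omega)

noncomputable def dgF (a : ℕ →₀ ℕ) : Finset Cell :=
  (a.support.sigma fun i => Finset.range (a i)).map (Equiv.sigmaEquivProd ℕ ℕ).toEmbedding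

lemma mem_dgF (a : ℕ →₀ ℕ) (c : Cell) : c ∈ dgF a ↔ c.2 < a c.1 := by
  obtain ⟨i, j⟩ := c
  simp only [dgF, Finset.mem_map, Finset.mem_sigma, Finsupp.mem_support_iff, Finset.mem_range]
  constructor
  · rintro ⟨⟨i', j'⟩, h, h2⟩
    simp at h2
    obtain ⟨rfl, rfl⟩ := h2
    exact h.2
  · intro h
    exact ⟨⟨i, j⟩, ⟨by dsimp only at h ⊢; omega, h⟩, rfl⟩

lemma card_dgF (a : ℕ →₀ ℕ) : (dgF a).card = a.degree := by
  rw [dgF, Finset.card_map, Finset.card_sigma, Finsupp.degree_apply]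
  simp

noncomputable def cnt (a : ℕ →₀ ℕ) (t : Cell → ℕ) (i : ℕ) : ℕ :=
  ((dgF a).filter fun c => t c = i).card

/-- Semistandard fillings of the diagram `a`. -/
def SSYTa (a : ℕ →₀ ℕ) (t : Cell → ℕ) : Prop :=
  (∀ i j, a i ≤ j → t (i, j) = 0) ∧ (∀ i j, j < a i → 0 < t (i, j)) ∧
  (∀ i j : ℕ, j + 1 < a i → t (i, j) ≤ t (i, j + 1)) ∧
  (∀ i j : ℕ, j < a (i + 1) → t (i, j) < t (i + 1, j))

def TabSet (a : ℕ →₀ ℕ) (w : List ℕ) : Set (Cell → ℕ) :=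
  {t | SSYTa a t ∧ ∀ i, cnt a t i = toW w i}

lemma TabSet_le {a : ℕ →₀ ℕ} {w : List ℕ} {t : Cell → ℕ} (ht : t ∈ TabSet a w) (i j : ℕ)
    (h : j < a i) : t (i, j) ≤ w.length := by
  by_contra hc
  have h1 := ht.2 (t (i, j))
  rw [toW_ge _ _ (by omega), cnt, Finset.card_eq_zero] at h1
  have : (i, j) ∈ (dgF a).filter fun c => t c = t (i, j) := by
    simp [mem_dgF, h]
  rw [h1] at this
  simp at this

lemma cnt_step (a b : ℕ →₀ ℕ) (hba : ∀ i, b i ≤ a i) (t t' : Cell → ℕ) (L : ℕ)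
    (h1 : ∀ i j, j < b i → t (i, j) = t' (i, j))
    (h2 : ∀ i j, b i ≤ j → j < a i → t (i, j) = L) (i : ℕ) :
    cnt a t i = cnt b t' i + if i = L then a.degree - b.degree else 0 := by
  have hsub : dgF b ⊆ dgF a := by
    intro c hc
    rw [mem_dgF] at hc ⊢
    exact hc.trans_le (hba _)
  unfold cnt
  rw [← Finset.union_sdiff_of_subset hsub, Finset.filter_union, Finset.card_union_of_disjoint]
  · congr 1
    · congr 1
      apply Finset.filter_congr
      rintro ⟨r, s⟩ hc
      rw [mem_dgF] at hc
      rw [h1 r s hc]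
    · have hall : ∀ c ∈ dgF a \ dgF b, t c = L := by
        rintro ⟨r, s⟩ hc
        rw [Finset.mem_sdiff, mem_dgF, mem_dgF] at hc
        exact h2 r s (by simpa using hc.2) hc.1
      split_ifs with hi
      · rw [Finset.filter_true_of_mem, Finset.card_sdiff_of_subset hsub, card_dgF, card_dgF]
        intro c hc
        rw [hall c hc, hi]
      · rw [Finset.filter_false_of_mem]
        · rfl
        · intro c hc h
          rw [hall c hc] at h
          exact hi h.symm
  · exact Finset.disjoint_filter_filter Finset.disjoint_sdiff

lemma inter_antitone {a b : ℕ →₀ ℕ} (h : b ∈ inter a) : Antitone b := by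
  rw [mem_inter] at h
  exact antitone_nat_of_succ_le fun i => (h.1 _).trans (h.2 i)

lemma finsupp_ext_lt {b b' : ℕ →₀ ℕ} (h : ∀ i j, j < b i ↔ j < b' i) : b = b' := by
  ext i
  have h1 := h i (b i)
  have h2 := h i (b' i)
  omega

/-- Extend a filling of `b` by the letter `L` on `a \ b`. -/
noncomputable def extT (a b : ℕ →₀ ℕ) (L : ℕ) (t : Cell → ℕ) (c : Cell) : ℕ :=
  if c.2 < b c.1 then t c else if c.2 < a c.1 then L else 0

lemma extT_mem {a b : ℕ →₀ ℕ} {m : ℕ} {w : List ℕ} (hb : b ∈ inter a)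
    (hd : a.degree = b.degree + m) {t : Cell → ℕ} (ht : t ∈ TabSet b w) :
    extT a b (w.length + 1) t ∈ TabSet a (m :: w) := by
  obtain ⟨hb1, hb2⟩ := mem_inter.1 hb
  have hle := TabSet_le ht
  obtain ⟨⟨s1, s2, s3, s4⟩, hc⟩ := ht
  refine ⟨⟨?_, ?_, ?_, ?_⟩, ?_⟩
  · intro i j h
    have := hb1 i
    simp only [extT]
    rw [if_neg (by omega), if_neg (by omega)]
  · intro i j h
    simp only [extT]
    split_ifs with h1
    · exact s2 i j h1
    · omega
  · intro i j h
    simp only [extT]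
    by_cases h1 : j + 1 < b i
    · rw [if_pos h1, if_pos (by omega)]
      exact s3 i j h1
    · rw [if_neg h1, if_pos h]
      split_ifs with h2 h3
      · have := hle i j h2; omega
      · rfl
      · simp
  · intro i j h
    have h5 := hb2 i
    simp only [extT]
    rw [if_pos (by omega)]
    split_ifs with h1
    · exact s4 i j h1
    · have := hle i j (by omega); omega
  · intro i
    rw [cnt_step a b hb1 _ t (w.length + 1), hc, toW_cons, hd, Nat.add_sub_cancel_left]
    · intro i j h; simp [extT, h]
    · intro i j h h'
      simp only [extT]
      rw [if_neg (by omega), if_pos h']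

lemma extT_surj {a : ℕ →₀ ℕ} (ha : Antitone a) {m : ℕ} {w : List ℕ} {t : Cell → ℕ}
    (ht : t ∈ TabSet a (m :: w)) : ∃ b ∈ inter a, a.degree = b.degree + m ∧
      ∃ t' ∈ TabSet b w, extT a b (w.length + 1) t' = t := by
  have hle := TabSet_le ht
  obtain ⟨⟨s1, s2, s3, s4⟩, hc⟩ := ht
  have hb : ∀ i, ∃ n, ∀ j, (j < a i ∧ t (i, j) ≤ w.length) ↔ j < n := by
    intro i
    have hex : ∃ j, ¬ (j < a i ∧ t (i, j) ≤ w.length) := ⟨a i, by simp⟩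
    refine ⟨Nat.find hex, fun j => ⟨fun h => ?_, fun h => ?_⟩⟩
    · by_contra hcon
      have hstep : ∀ j, Nat.find hex ≤ j → ¬ (j < a i ∧ t (i, j) ≤ w.length) := by
        intro j hj
        induction j, hj using Nat.le_induction with
        | base => exact Nat.find_spec hex
        | succ j _ ih =>
          rintro ⟨h1, h2⟩
          exact ih ⟨by omega, (s3 i j h1).trans h2⟩
      exact hstep j (by omega) h
    · have := Nat.find_min hex h
      tauto
  choose b0 hb0 using hb
  have hb0a : ∀ i, b0 i ≤ a i := by
    intro i
    by_contra hcon
    have := (hb0 i (a i)).2 (by omega)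
    omega
  let b : ℕ →₀ ℕ := Finsupp.onFinset a.support b0 (by
    intro i hi
    have := hb0a i
    simp; omega)
  have hbb : ∀ i, b i = b0 i := fun i => rfl
  have hbi : b ∈ inter a := by
    rw [mem_inter]
    refine ⟨hb0a, fun i => ?_⟩
    by_contra hcon
    have h1 : b0 i < a (i + 1) := by rw [hbb] at hcon; omega
    have h2 := s4 i (b0 i) h1
    have h3 := hle (i + 1) (b0 i) h1
    simp at h3
    have h4 := ha (Nat.le_succ i)
    have := (hb0 i (b0 i)).1 ⟨by simp at h4; omega, by omega⟩
    omega
  obtain ⟨hb1, hb2⟩ := mem_inter.1 hbi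
  let t' : Cell → ℕ := fun c => if c.2 < b c.1 then t c else 0
  have ht' : ∀ i j, j < b i → t (i, j) = t' (i, j) := by
    intro i j h; simp only [t']; rw [if_pos h]
  have hL : ∀ i j, b i ≤ j → j < a i → t (i, j) = w.length + 1 := by
    intro i j h h'
    have h1 := hle i j h'
    simp at h1
    by_contra hcon
    have := (hb0 i j).1 ⟨h', by omega⟩
    rw [hbb] at h
    omega
  have hcs := cnt_step a b hb1 t t' (w.length + 1) ht' hL
  have hz : cnt b t' (w.length + 1) = 0 := by
    rw [cnt, Finset.card_eq_zero, Finset.filter_eq_empty_iff]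
    rintro ⟨i, j⟩ h h2
    rw [mem_dgF] at h
    rw [← ht' i j h] at h2
    have := ((hb0 i j).2 h).2
    omega
  have hdle : b.degree ≤ a.degree := Finsupp.degree_mono hb1
  have hdm : a.degree - b.degree = m := by
    have := hcs (w.length + 1)
    rw [hz, hc, toW_cons, if_pos rfl, if_pos rfl, toW_ge _ _ (by omega)] at this
    omega
  refine ⟨b, hbi, by omega, t', ⟨⟨?_, ?_, ?_, ?_⟩, ?_⟩, ?_⟩
  · intro i j h
    simp only [t']
    rw [if_neg (by omega)]
  · intro i j h
    rw [← ht' i j h]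
    exact s2 i j (h.trans_le (hb1 i))
  · intro i j h
    rw [← ht' i _ h, ← ht' i j (by omega)]
    exact s3 i j (h.trans_le (hb1 i))
  · intro i j h
    have := hb1 (i + 1)
    have := hb2 i
    rw [← ht' _ _ h, ← ht' i j (by omega)]
    exact s4 i j (by omega)
  · intro i
    have := hcs i
    rw [hc, toW_cons, hdm] at this
    omega
  · funext c
    obtain ⟨i, j⟩ := c
    simp only [extT]
    split_ifs with h1 h2
    · exact (ht' i j h1).symm
    · exact (hL i j (by omega) h2).symm
    · exact (s1 i j (by omega)).symm

lemma extT_inj {a b b' : ℕ →₀ ℕ} {w : List ℕ} (hb : b ∈ inter a) (hb' : b' ∈ inter a)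
    {t t' : Cell → ℕ} (ht : t ∈ TabSet b w) (ht' : t' ∈ TabSet b' w)
    (h : extT a b (w.length + 1) t = extT a b' (w.length + 1) t') : b = b' ∧ t = t' := by
  have key : ∀ (b : ℕ →₀ ℕ) (t : Cell → ℕ), b ∈ inter a → t ∈ TabSet b w → ∀ i j,
      (j < b i ↔ (j < a i ∧ extT a b (w.length + 1) t (i, j) ≤ w.length)) := by
    intro b t hb ht i j
    have h1 := (mem_inter.1 hb).1 i
    simp only [extT]
    constructor
    · intro h
      rw [if_pos h]
      exact ⟨by omega, TabSet_le ht i j h⟩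
    · rintro ⟨h2, h3⟩
      by_contra hc
      rw [if_neg hc, if_pos h2] at h3
      omega
  have hbb : b = b' := finsupp_ext_lt fun i j => by
    rw [key b t hb ht, key b' t' hb' ht', h]
  subst hbb
  refine ⟨rfl, ?_⟩
  funext c
  obtain ⟨i, j⟩ := c
  have h1 := congrFun h (i, j)
  simp only [extT] at h1
  by_cases h2 : j < b i
  · rwa [if_pos h2, if_pos h2] at h1
  · rw [ht.1.1 i j (by omega), ht'.1.1 i j (by omega)]

lemma TabSet_nil (a : ℕ →₀ ℕ) : ((TabSet a []).ncard : ℚ) = if a = 0 then 1 else 0 := by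
  split_ifs with h
  · subst h
    have : TabSet 0 [] = {fun _ => 0} := by
      ext t
      simp only [Set.mem_singleton_iff]
      constructor
      · intro ht
        funext c
        exact ht.1.1 c.1 c.2 (by simp)
      · rintro rfl
        refine ⟨⟨by simp, by simp, by simp, by simp⟩, fun i => ?_⟩
        rw [show toW [] i = 0 from by cases i <;> simp [toW, rowsOf], cnt, Finset.card_eq_zero,
          Finset.filter_eq_empty_iff]
        intro c hc
        rw [mem_dgF] at hc
        simp at hc
    rw [this]
    simp
  · have : TabSet a [] = ∅ := by
      rw [Set.eq_empty_iff_forall_notMem]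
      intro t ht
      apply h
      ext i
      by_contra hc
      have h1 : 0 < a i := Nat.pos_of_ne_zero hc
      have h2 := TabSet_le ht i 0 h1
      have h3 := ht.1.2.1 i 0 h1
      simp at h2
      omega
    rw [this]
    simp

lemma TabSet_card (w : List ℕ) : ∀ a : ℕ →₀ ℕ, Antitone a →
    (TabSet a w).Finite ∧ ((TabSet a w).ncard : ℚ) = KK w a := by
  induction w with
  | nil =>
    intro a ha
    refine ⟨?_, by rw [TabSet_nil, KK]⟩
    by_cases h : a = 0
    · apply Set.finite_of_ncard_ne_zero
      have := TabSet_nil a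
      rw [if_pos h] at this
      intro h0
      simp [h0] at this
    · have : TabSet a [] = ∅ := by
        rw [Set.eq_empty_iff_forall_notMem]
        intro t ht
        apply h
        ext i
        by_contra hc
        have h1 : 0 < a i := Nat.pos_of_ne_zero hc
        have h2 := TabSet_le ht i 0 h1
        have h3 := ht.1.2.1 i 0 h1
        simp at h2
        omega
      rw [this]
      exact Set.finite_empty
  | cons m w ih =>
    intro a ha
    have hfin : ∀ b ∈ inter a, (TabSet b w).Finite := fun b hb => (ih b (inter_antitone hb)).1
    let F : (ℕ →₀ ℕ) → Finset (Cell → ℕ) := fun b =>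
      if h : (TabSet b w).Finite then h.toFinset else ∅
    have hF : ∀ b ∈ inter a, ∀ t, t ∈ F b ↔ t ∈ TabSet b w := by
      intro b hb t
      simp only [F]
      rw [dif_pos (hfin b hb)]
      simp
    have hFc : ∀ b ∈ inter a, ((F b).card : ℚ) = KK w b := by
      intro b hb
      rw [← (ih b (inter_antitone hb)).2, Set.ncard_eq_toFinset_card _ (hfin b hb)]
      simp only [F]
      rw [dif_pos (hfin b hb)]
    let S := ((inter a).filter fun b => a.degree = b.degree + m).sigma F
    let φ : (_ : ℕ →₀ ℕ) × (Cell → ℕ) → (Cell → ℕ) := fun p => extT a p.1 (w.length + 1) p.2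
    have himg : TabSet a (m :: w) = (S.image φ : Finset (Cell → ℕ)) := by
      ext t
      simp only [Finset.coe_image, Set.mem_image, Finset.mem_coe]
      constructor
      · intro ht
        obtain ⟨b, hb, hd, t', ht', he⟩ := extT_surj ha ht
        exact ⟨⟨b, t'⟩, by simp only [S, Finset.mem_sigma, Finset.mem_filter]; exact ⟨⟨hb, hd⟩, (hF b hb t').2 ht'⟩, he⟩
      · rintro ⟨⟨b, t'⟩, hp, rfl⟩
        simp only [S, Finset.mem_sigma, Finset.mem_filter] at hp
        exact extT_mem hp.1.1 hp.1.2 ((hF b hp.1.1 t').1 hp.2)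
    refine ⟨by rw [himg]; exact Finset.finite_toSet _, ?_⟩
    rw [himg, Set.ncard_coe_finset, Finset.card_image_of_injOn, Finset.card_sigma, KK,
      ← Finset.sum_filter]
    · push_cast
      apply Finset.sum_congr rfl
      intro b hb
      exact hFc b (Finset.mem_filter.1 hb).1
    · rintro ⟨b, t⟩ hp ⟨b', t'⟩ hp' h
      simp only [S, Finset.coe_sigma, Set.mem_sigma_iff, Finset.mem_coe, Finset.mem_filter] at hp hp'
      obtain ⟨rfl, rfl⟩ := extT_inj hp.1.1 hp'.1.1 ((hF _ hp.1.1 _).1 hp.2)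
        ((hF _ hp'.1.1 _).1 hp'.2) h
      rfl

/-! ## Partitions -/

noncomputable def wt {N : ℕ} (lam : Nat.Partition N) : List ℕ := lam.parts.sort (· ≤ ·)

noncomputable def rows {N : ℕ} (lam : Nat.Partition N) : ℕ →₀ ℕ := rowsF (wt lam)

lemma rows_apply {N : ℕ} (lam : Nat.Partition N) (i : ℕ) : rows lam i = rowLen lam i := rfl

lemma rowsOf_antitone (l : List ℕ) (hl : l.Pairwise (· ≤ ·)) : Antitone (rowsOf l) := by
  have h : l.reverse.Pairwise (fun a b => b ≤ a) := List.pairwise_reverse.2 hl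
  apply antitone_nat_of_succ_le
  intro i
  unfold rowsOf
  by_cases hi : i + 1 < l.reverse.length
  · rw [List.getD_eq_getElem _ _ hi, List.getD_eq_getElem _ _ (by omega)]
    exact List.pairwise_iff_getElem.1 h i (i + 1) (by omega) hi (by omega)
  · rw [List.getD_eq_getElem?_getD, List.getElem?_eq_none (by omega)]
    simp

lemma wt_sorted {N : ℕ} (lam : Nat.Partition N) : (wt lam).Pairwise (· ≤ ·) :=
  Multiset.pairwise_sort _ _

lemma rows_antitone {N : ℕ} (lam : Nat.Partition N) : Antitone (rows lam) :=
  rowsOf_antitone _ (wt_sorted lam)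

lemma wt_sum {N : ℕ} (lam : Nat.Partition N) : (wt lam).sum = N := by
  have : ((wt lam : List ℕ) : Multiset ℕ) = lam.parts := Multiset.sort_eq _ _
  rw [← Multiset.sum_coe, this, lam.parts_sum]

lemma rows_degree {N : ℕ} (lam : Nat.Partition N) : (rows lam).degree = N := by
  rw [rows, rowsF_degree, wt_sum]

lemma schurFn_toW {N : ℕ} (lam : Nat.Partition N) (w : List ℕ) :
    schurFn lam (toW w) = KK w (rows lam) := by
  rw [← (TabSet_card w (rows lam) (rows_antitone lam)).2, schurFn, ← Nat.card_coe_set_eq]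
  congr 1
  apply Nat.card_congr
  apply Equiv.subtypeEquivRight
  intro t
  have hcnt : ∀ i, Nat.card {c : Cell // c ∈ diag lam ∧ t c = i} = cnt (rows lam) t i := by
    intro i
    exact Nat.subtype_card _ (fun c => by rw [Finset.mem_filter, mem_dgF]; rfl)
  simp only [hcnt]
  apply and_congr _ Iff.rfl
  constructor
  · rintro ⟨h1, h2, h3, h4⟩
    exact ⟨fun i j h => h1 (i, j) (not_lt.2 h),
      fun i j h => h2 (i, j) h, fun i j h => h3 i j h, fun i j h => h4 i j h⟩
  · rintro ⟨h1, h2, h3, h4⟩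
    exact ⟨fun c h => h1 c.1 c.2 (not_lt.1 h),
      fun c h => h2 c.1 c.2 h, fun i j h => h3 i j h, fun i j h => h4 i j h⟩

lemma wt_pos {N : ℕ} (lam : Nat.Partition N) : ∀ x ∈ wt lam, 0 < x := by
  intro x hx
  apply lam.parts_pos
  rw [wt, Multiset.mem_sort] at hx
  exact hx

lemma rowsOf_pos (w : List ℕ) (h : ∀ x ∈ w, 0 < x) (i : ℕ) (hi : i < w.length) :
    0 < rowsOf w i := by
  unfold rowsOf
  rw [List.getD_eq_getElem _ _ (by simpa using hi)]
  apply h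
  rw [← List.mem_reverse]
  exact List.getElem_mem _

lemma wt_length_le {N : ℕ} (lam : Nat.Partition N) : (wt lam).length ≤ N := by
  have h := List.length_le_sum_of_one_le (wt lam) (fun x hx => wt_pos lam x hx)
  exact h.trans (wt_sum lam).le

lemma rowsOf_inj (w w' : List ℕ) (h : ∀ x ∈ w, 0 < x) (h' : ∀ x ∈ w', 0 < x)
    (he : ∀ i, rowsOf w i = rowsOf w' i) : w = w' := by
  have hl : w.length = w'.length := by
    rcases lt_trichotomy w.length w'.length with hlt | heq | hgt
    · have h1 := rowsOf_pos w' h' _ hlt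
      rw [← he, rowsOf_ge _ _ le_rfl] at h1
      omega
    · exact heq
    · have h1 := rowsOf_pos w h _ hgt
      rw [he, rowsOf_ge _ _ le_rfl] at h1
      omega
  rw [← List.reverse_inj]
  apply List.ext_getElem (by simpa using hl)
  intro i h1 h2
  have := he i
  unfold rowsOf at this
  rwa [List.getD_eq_getElem _ _ h1, List.getD_eq_getElem _ _ h2] at this

lemma rows_inj {N : ℕ} {lam lam' : Nat.Partition N} (h : rows lam = rows lam') : lam = lam' := by
  have := rowsOf_inj (wt lam) (wt lam') (wt_pos _) (wt_pos _) (fun i => DFunLike.congr_fun h i)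
  apply Nat.Partition.ext
  rw [← Multiset.sort_eq lam.parts (· ≤ ·), ← Multiset.sort_eq lam'.parts (· ≤ ·)]
  exact congrArg _ this

noncomputable def hgt {N : ℕ} (lam : Nat.Partition N) : ℕ :=
  ∑ j ∈ Finset.range (N + 1), ∑ i ∈ Finset.range j, rows lam i

lemma rows_ge {N : ℕ} (lam : Nat.Partition N) (i : ℕ) (h : (wt lam).length ≤ i) : rows lam i = 0 :=
  rowsOf_ge _ _ h

lemma eq_of_hgt {N : ℕ} {nu kap : Nat.Partition N} (h : KK (wt nu) (rows kap) ≠ 0)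
    (hh : hgt kap ≤ hgt nu) : kap = nu := by
  have hd := KK_dom _ _ h
  have hle : ∀ j ∈ Finset.range (N + 1), ∑ i ∈ Finset.range j, rows nu i
      ≤ ∑ i ∈ Finset.range j, rows kap i := fun j _ => hd j
  have heq := (Finset.sum_eq_sum_iff_of_le hle).1 (le_antisymm (Finset.sum_le_sum hle) hh)
  have h3 := eq_of_psum (rows nu) (rows kap) N (fun j hj => heq j (by simp; omega))
  apply rows_inj
  ext i
  by_cases hi : i < N
  · exact (h3 i hi).symm
  · rw [rows_ge _ _ ((wt_length_le _).trans (by omega)),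
      rows_ge _ _ ((wt_length_le _).trans (by omega))]

lemma KK_wt_self {N : ℕ} (nu : Nat.Partition N) : KK (wt nu) (rows nu) = 1 :=
  KK_self _ (rowsOf_antitone _ (wt_sorted nu))

lemma length_le_of_KK {N : ℕ} {nu kap : Nat.Partition N} {w : List ℕ} (h : KK w (rows kap) ≠ 0) :
    (wt kap).length ≤ w.length := by
  by_contra hc
  have h1 := KK_supp _ _ h w.length le_rfl
  have h2 := rowsOf_pos (wt kap) (wt_pos kap) w.length (by omega)
  have h3 : rows kap w.length = rowsOf (wt kap) w.length := rfl
  omega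

lemma coeff_vanish {N : ℕ} (c : Nat.Partition N → ℚ) (n : ℕ)
    (h : ∀ nu : Nat.Partition N, (wt nu).length < n →
      ∑ kap, c kap * KK (wt nu) (rows kap) = 0) :
    ∀ nu : Nat.Partition N, (wt nu).length < n → c nu = 0 := by
  by_contra hcon
  push Not at hcon
  obtain ⟨nu0, hn0, hc0⟩ := hcon
  let S : Finset (Nat.Partition N) := Finset.univ.filter fun nu => (wt nu).length < n ∧ c nu ≠ 0
  obtain ⟨nu, hnu, hmax⟩ := Finset.exists_max_image S hgt ⟨nu0, by simp [S, hn0, hc0]⟩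
  simp only [S, Finset.mem_filter, Finset.mem_univ, true_and] at hnu hmax
  have h1 := h nu hnu.1
  rw [Finset.sum_eq_single nu] at h1
  · rw [KK_wt_self, mul_one] at h1
    exact hnu.2 h1
  · intro kap _ hne
    by_contra hk
    have hk1 := left_ne_zero_of_mul hk
    have hk2 := right_ne_zero_of_mul hk
    have hl := length_le_of_KK (nu := nu) hk2
    exact hne (eq_of_hgt hk2 (hmax kap ⟨by omega, hk1⟩))
  · simp

noncomputable def TT (N : ℕ) : (Nat.Partition N → ℚ) →ₗ[ℚ] (Nat.Partition N → ℚ) where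
  toFun c nu := ∑ kap, c kap * KK (wt nu) (rows kap)
  map_add' c d := by
    funext nu
    simp [add_mul, Finset.sum_add_distrib]
  map_smul' r c := by
    funext nu
    simp [Finset.mul_sum, mul_assoc]

lemma TT_surj (N : ℕ) : Function.Surjective (TT N) := by
  rw [← LinearMap.injective_iff_surjective, injective_iff_map_eq_zero]
  intro c hc
  funext nu
  apply coeff_vanish c (N + 1)
  · intro nu _
    exact congrFun hc nu
  · have := wt_length_le nu; omega

lemma toW_zero_cons (w : List ℕ) : toW (0 :: w) = toW w := by
  funext i
  rw [toW_cons]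
  simp

lemma toW_zeros (z : ℕ) (w : List ℕ) : toW (List.replicate z 0 ++ w) = toW w := by
  induction z with
  | zero => rfl
  | succ z ih => rw [List.replicate_succ, List.cons_append, toW_zero_cons, ih]

lemma toW_surj (μ : ℕ → ℕ) (n : ℕ) (h0 : μ 0 = 0) (hn : ∀ i, n < i → μ i = 0) :
    ∃ w, w.length = n ∧ μ = toW w := by
  refine ⟨((List.range n).map fun i => μ (i + 1)).reverse, by simp, ?_⟩
  funext i
  cases i with
  | zero => exact h0
  | succ i =>
    simp only [toW, rowsOf, List.reverse_reverse]
    by_cases hi : i < n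
    · rw [List.getD_eq_getElem _ _ (by simpa using hi)]
      simp
    · rw [List.getD_eq_getElem?_getD, List.getElem?_eq_none (by simpa using hi), hn _ (by omega)]
      rfl

lemma perm_wt (w : List ℕ) (N : ℕ) (h : w.sum = N) :
    ∃ (lam : Nat.Partition N) (z : ℕ), w.Perm (List.replicate z 0 ++ wt lam) := by
  refine ⟨Nat.Partition.ofSums N (w : Multiset ℕ) (by simpa using h), (w : Multiset ℕ).count 0, ?_⟩
  rw [← Multiset.coe_eq_coe, ← Multiset.coe_add, wt, Multiset.sort_eq,
    Nat.Partition.ofSums_parts, Multiset.coe_replicate, ← Multiset.filter_eq']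
  exact (Multiset.filter_add_not _ _).symm

lemma schurFn_supp {N : ℕ} (lam : Nat.Partition N) (μ : ℕ → ℕ) (h : schurFn lam μ ≠ 0) :
    ∃ w, μ = toW w ∧ w.sum = N := by
  have h' := h
  unfold schurFn at h
  have hne : Nat.card {t : Cell → ℕ // IsSSYT lam t ∧
    ∀ i, Nat.card {c : Cell // c ∈ diag lam ∧ t c = i} = μ i} ≠ 0 := by exact_mod_cast h
  obtain ⟨⟨⟨t, ht, hμ⟩⟩, -⟩ := Nat.card_ne_zero.1 hne
  have hcnt : ∀ i, Nat.card {c : Cell // c ∈ diag lam ∧ t c = i} = cnt (rows lam) t i := by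
    intro i
    exact Nat.subtype_card _ (fun c => by rw [Finset.mem_filter, mem_dgF]; rfl)
  obtain ⟨w, -, hw⟩ := toW_surj μ ((dgF (rows lam)).sup t) (by
    rw [← hμ, hcnt, cnt, Finset.card_eq_zero, Finset.filter_eq_empty_iff]
    intro c hc h0
    rw [mem_dgF] at hc
    have := ht.2.1 c hc
    omega) (by
    intro i hi
    rw [← hμ, hcnt, cnt, Finset.card_eq_zero, Finset.filter_eq_empty_iff]
    intro c hc h0
    have := Finset.le_sup (f := t) hc
    omega)
  refine ⟨w, hw, ?_⟩
  subst hw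
  rw [schurFn_toW] at h'
  rw [← KK_degree _ _ h', rows_degree]

lemma exists_expansion {N : ℕ} (f : (ℕ → ℕ) → ℚ)
    (hs : ∀ μ, f μ ≠ 0 → ∃ w, μ = toW w ∧ w.sum = N)
    (hp : ∀ w w' : List ℕ, w.Perm w' → f (toW w) = f (toW w')) :
    ∃ c : Nat.Partition N →₀ ℚ, ∀ μ, f μ = c.sum fun ν a => a * schurFn ν μ := by
  obtain ⟨c, hc⟩ := TT_surj N (fun nu => f (toW (wt nu)))
  refine ⟨Finsupp.equivFunOnFinite.symm c, fun μ => ?_⟩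
  rw [Finsupp.sum_fintype _ _ (by simp)]
  simp only [Finsupp.equivFunOnFinite_symm_apply_apply]
  by_cases hμ : ∃ w, μ = toW w ∧ w.sum = N
  · obtain ⟨w, rfl, hw⟩ := hμ
    obtain ⟨lam, z, hperm⟩ := perm_wt w N hw
    rw [hp _ _ hperm, toW_zeros]
    have h1 := congrFun hc lam
    rw [← h1]
    simp only [TT, LinearMap.coe_mk, AddHom.coe_mk]
    apply Finset.sum_congr rfl
    intro kap _
    rw [schurFn_toW, KK_perm hperm, KK_zeros _ _ _ (rows_antitone kap)]
  · have h0 : f μ = 0 := by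
      by_contra h
      exact hμ (hs μ h)
    rw [h0, Finset.sum_eq_zero]
    intro kap _
    have : schurFn kap μ = 0 := by
      by_contra h
      exact hμ (schurFn_supp kap μ h)
    rw [this, mul_zero]

/-- `w` padded to length `n` by zeros, all entries raised by one. -/
def pad (n : ℕ) (w : List ℕ) : List ℕ := (List.replicate (n - w.length) 0 ++ w).map (· + 1)

lemma pad_length (n : ℕ) (w : List ℕ) (h : w.length ≤ n) : (pad n w).length = n := by
  simp [pad]; omega

lemma extract {N n k : ℕ} (hN : N = n + k) (hk : k ≤ n) (c : Nat.Partition N → ℚ)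
    (f : (ℕ → ℕ) → ℚ) (hf : ∀ μ, f μ = ∑ kap, c kap * schurFn kap μ)
    (hv : ∀ nu : Nat.Partition N, (wt nu).length < n → f (toW (wt nu)) = 0)
    (lam : Nat.Partition N) (hl : rows lam = ones n + ones k) :
    AA k (fun w => f (toW (pad n w))) = c lam := by
  have hc := coeff_vanish c n (fun nu hnu => by
    have := hv nu hnu
    rw [hf] at this
    simpa only [schurFn_toW] using this)
  have hlen : ∀ w : List ℕ, (∀ x ∈ w, 0 < x) → w.sum = k → w.length ≤ n := by
    intro w hw hs
    have := List.length_le_sum_of_one_le w (fun x hx => hw x hx)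
    omega
  simp only [hf, schurFn_toW]
  rw [AA_sum, Finset.sum_eq_single lam]
  · rw [AA_smul, AA_congr k _ (fun w => KK w (ones k)), AA_KK k _ (ones_degree k), if_pos rfl,
      mul_one]
    intro w hw hs
    have hL := hlen w hw hs
    have hlen2 : (List.replicate (n - w.length) 0 ++ w).length = n := by simp; omega
    rw [hl, pad]
    conv_lhs => rw [← hlen2]
    rw [hlen2]
    have := KK_column (List.replicate (n - w.length) 0 ++ w) (ones k)
    rw [hlen2] at this
    rw [this, KK_zeros]
    apply antitone_nat_of_succ_le
    intro i
    simp only [ones_apply]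
    split_ifs <;> omega
  · intro kap _ hne
    rw [AA_smul]
    rcases lt_trichotomy (wt kap).length n with hlt | heq | hgt
    · rw [hc kap hlt, zero_mul]
    · -- exactly n rows
      obtain ⟨a, ha⟩ : ∃ a, rows kap = ones n + a := by
        refine ⟨rows kap - ones n, ?_⟩
        ext i
        rw [Finsupp.add_apply, Finsupp.tsub_apply, ones_apply]
        split_ifs with hi
        · have : 0 < rows kap i := rowsOf_pos (wt kap) (wt_pos kap) i (by omega)
          omega
        · omega
      have hdeg : a.degree = k := by
        have := rows_degree kap
        rw [ha, map_add, ones_degree] at this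
        omega
      have hanti : Antitone a := by
        apply antitone_nat_of_succ_le
        intro i
        have h1 := rows_antitone kap (Nat.le_succ i)
        have h2 : n ≤ i + 1 → rows kap (i + 1) = 0 := fun h => rows_ge _ _ (by omega)
        rw [ha] at h1 h2
        simp only [Finsupp.add_apply, ones_apply, Nat.succ_eq_add_one] at h1 h2
        split_ifs at h1 h2 <;> omega
      rw [AA_congr k _ (fun w => KK w a), AA_KK k _ hdeg, if_neg, mul_zero]
      · rintro rfl
        exact hne (rows_inj (ha.trans hl.symm))
      · intro w hw hs
        have hL := hlen w hw hs
        have hlen2 : (List.replicate (n - w.length) 0 ++ w).length = n := by simp; omega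
        have := KK_column (List.replicate (n - w.length) 0 ++ w) a
        rw [hlen2] at this
        rw [ha, pad, this, KK_zeros _ _ _ hanti]
    · rw [AA_congr k _ (fun _ => 0), AA_const_zero, mul_zero]
      intro w hw hs
      by_contra hK
      have := length_le_of_KK (nu := kap) hK
      rw [pad_length n w (hlen w hw hs)] at this
      omega
  · simp

lemma rows_twoOne (a b : ℕ) : rows (twoOne a b) = ones (a + b) + ones a := by
  have hwt : wt (twoOne a b) = List.replicate b 1 ++ List.replicate a 2 := by
    apply List.Perm.eq_of_pairwise (le := (· ≤ ·))
    · intro x y _ _ h1 h2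
      exact le_antisymm h1 h2
    · exact wt_sorted _
    · rw [List.pairwise_append]
      refine ⟨List.pairwise_replicate_of_refl, List.pairwise_replicate_of_refl, ?_⟩
      intro x hx y hy
      rw [List.eq_of_mem_replicate hx, List.eq_of_mem_replicate hy]
      omega
    · rw [← Multiset.coe_eq_coe, wt, Multiset.sort_eq, ← Multiset.coe_add,
        Multiset.coe_replicate, Multiset.coe_replicate]
      exact add_comm _ _
  ext i
  rw [rows, hwt, rowsF_apply, rowsOf, Finsupp.add_apply, ones_apply, ones_apply]
  simp only [List.reverse_append, List.reverse_replicate, List.getD_eq_getElem?_getD,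
    List.getElem?_append, List.getElem?_replicate, List.length_replicate]
  split_ifs <;> first | rfl | omega

/-! ## The graph side -/

lemma perm_toW {w w' : List ℕ} (h : w.Perm w') : ∃ π : Equiv.Perm ℕ, π 0 = 0 ∧
    (∀ i, w.length < i → π i = i) ∧ ∀ i, toW w' i = toW w (π i) := by
  induction h with
  | nil => exact ⟨Equiv.refl _, rfl, fun _ _ => rfl, fun _ => rfl⟩
  | @cons x l l' hp ih =>
    obtain ⟨π, h0, h1, h2⟩ := ih
    refine ⟨π, h0, fun i hi => h1 i (by simp at hi; omega), fun i => ?_⟩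
    rw [toW_cons, toW_cons, h2, hp.length_eq]
    congr 1
    have h3 : π (l'.length + 1) = l'.length + 1 := h1 _ (by rw [hp.length_eq]; omega)
    have : π i = l'.length + 1 ↔ i = l'.length + 1 := by
      constructor
      · intro h
        exact π.injective (h.trans h3.symm)
      · rintro rfl
        exact h3
    simp only [this]
  | swap x y l =>
    refine ⟨Equiv.swap (l.length + 1) (l.length + 2), ?_, ?_, ?_⟩
    · exact Equiv.swap_apply_of_ne_of_ne (by omega) (by omega)
    · intro i hi
      simp at hi
      exact Equiv.swap_apply_of_ne_of_ne (by omega) (by omega)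
    · intro i
      have ha : toW l (l.length + 1) = 0 := toW_ge _ _ (by omega)
      have hb : toW l (l.length + 2) = 0 := toW_ge _ _ (by omega)
      simp only [toW_cons, List.length_cons]
      by_cases h1 : i = l.length + 1
      · subst h1
        rw [Equiv.swap_apply_left]
        simp [ha, hb]
      · by_cases h2 : i = l.length + 2
        · subst h2
          rw [Equiv.swap_apply_right]
          simp [ha, hb]
        · rw [Equiv.swap_apply_of_ne_of_ne h1 h2]
          simp [h1, h2]
  | @trans l1 l2 l3 hp1 hp2 ih1 ih2 =>
    obtain ⟨π, h0, h1, h2⟩ := ih1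
    obtain ⟨ρ, g0, g1, g2⟩ := ih2
    refine ⟨ρ.trans π, by simp [h0, g0], fun i hi => ?_, fun i => ?_⟩
    · rw [Equiv.trans_apply, g1 i (by rw [← hp1.length_eq]; exact hi), h1 i hi]
    · rw [g2, h2]
      rfl

lemma XCoeff_comp {V : Type*} [Fintype V] (G : SimpleGraph V) (μ : ℕ → ℕ)
    (π : Equiv.Perm ℕ) (h0 : π 0 = 0) : XCoeff G (fun i => μ (π i)) = XCoeff G μ := by
  unfold XCoeff
  congr 1
  apply Nat.card_congr
  refine Equiv.subtypeEquiv (Equiv.arrowCongr (Equiv.refl V) π) (fun f => ?_)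
  have e : ∀ v, (Equiv.arrowCongr (Equiv.refl V) π) f v = π (f v) := fun v => rfl
  have hz : ∀ x, π x = 0 ↔ x = 0 := fun x =>
    ⟨fun h => π.injective (h.trans h0.symm), fun h => by rw [h, h0]⟩
  unfold IsProperColoring
  simp only [e, Nat.pos_iff_ne_zero, ne_eq, hz, π.injective.eq_iff]
  refine and_congr_right fun _ => ?_
  constructor
  · intro h i
    obtain ⟨j, rfl⟩ := π.surjective i
    simp only [π.injective.eq_iff]
    exact h j
  · intro h i
    have := h (π i)
    simp only [π.injective.eq_iff] at this
    exact this

lemma XCoeff_perm {V : Type*} [Fintype V] (G : SimpleGraph V) (w w' : List ℕ) (h : w.Perm w') :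
    XCoeff G (toW w) = XCoeff G (toW w') := by
  obtain ⟨π, h0, -, h2⟩ := perm_toW h
  have : toW w' = fun i => toW w (π i) := funext h2
  rw [this, XCoeff_comp _ _ _ h0]

lemma exists_of_XCoeff {V : Type*} [Fintype V] (G : SimpleGraph V) (μ : ℕ → ℕ)
    (h : XCoeff G μ ≠ 0) : ∃ f : V → ℕ, IsProperColoring G f ∧
      ∀ i, Nat.card {v : V // f v = i} = μ i := by
  unfold XCoeff at h
  have hne : Nat.card {f : V → ℕ //
    IsProperColoring G f ∧ ∀ i, Nat.card {v : V // f v = i} = μ i} ≠ 0 := by exact_mod_cast h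
  obtain ⟨⟨⟨f, hf⟩⟩, -⟩ := Nat.card_ne_zero.1 hne
  exact ⟨f, hf⟩

lemma count_eq_zero {V : Type*} [Fintype V] {f : V → ℕ} {i : ℕ}
    (h : Nat.card {v : V // f v = i} = 0) (v : V) : f v ≠ i := by
  intro hv
  rw [Nat.card_eq_zero] at h
  rcases h with h | h
  · exact h.false ⟨v, hv⟩
  · exact h.not_finite inferInstance

lemma XCoeff_supp {V : Type*} [Fintype V] (G : SimpleGraph V) (N : ℕ) (hN : Fintype.card V = N)
    (μ : ℕ → ℕ) (h : XCoeff G μ ≠ 0) : ∃ w, μ = toW w ∧ w.sum = N := by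
  obtain ⟨f, hf, hμ⟩ := exists_of_XCoeff G μ h
  have hz : ∀ i, (∀ v, f v ≠ i) → μ i = 0 := by
    intro i hi
    rw [← hμ, Nat.card_eq_zero]
    exact Or.inl ⟨fun v => hi v.1 v.2⟩
  have hle : ∀ v, f v ≤ Finset.univ.sup f := fun v => Finset.le_sup (Finset.mem_univ v)
  obtain ⟨w, hw, rfl⟩ := toW_surj μ (Finset.univ.sup f)
    (hz 0 fun v => (hf.1 v).ne') (fun i hi => hz i fun v => by have := hle v; omega)
  refine ⟨w, rfl, ?_⟩
  rw [← sum_rowsOf w _ le_rfl, ← hN, ← Finset.card_univ,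
    Finset.card_eq_sum_card_fiberwise (f := fun v => f v - 1) (t := Finset.range w.length)]
  · apply Finset.sum_congr rfl
    intro i _
    have := hμ (i + 1)
    change _ = rowsOf w i at this
    rw [← this]
    apply Nat.subtype_card
    intro v
    have := hf.1 v
    simp only [Finset.mem_filter, Finset.mem_univ, true_and]
    omega
  · intro v _
    have := hf.1 v
    have := hle v
    simp only [Finset.coe_range, Set.mem_Iio]
    omega

lemma XCoeff_clique {V : Type*} [Fintype V] (G : SimpleGraph V) (n : ℕ) (b : Fin n → V)
    (hb : ∀ i j, i ≠ j → G.Adj (b i) (b j)) (w : List ℕ) (hw : w.length < n) :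
    XCoeff G (toW w) = 0 := by
  by_contra h
  obtain ⟨f, hf, hμ⟩ := exists_of_XCoeff G _ h
  have hm : ∀ i ∈ (Finset.univ : Finset (Fin n)), f (b i) ∈ Finset.Icc 1 w.length := by
    intro i _
    rw [Finset.mem_Icc]
    refine ⟨hf.1 _, ?_⟩
    by_contra hc
    exact count_eq_zero ((hμ (f (b i))).trans (toW_ge _ _ (by omega))) (b i) rfl
  obtain ⟨i, -, j, -, hij, he⟩ := Finset.exists_ne_map_eq_of_card_lt_of_maps_to
    (by simpa using hw) hm
  exact hf.2 _ _ (hb i j hij) he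

lemma XCoeff_clique_zero {V : Type*} [Fintype V] (G : SimpleGraph V) (n : ℕ) (b : Fin n → V)
    (hb : ∀ i j, i ≠ j → G.Adj (b i) (b j)) (w : List ℕ) (hw : w.length ≤ n) (h0 : 0 ∈ w) :
    XCoeff G (toW w) = 0 := by
  rw [XCoeff_perm G _ _ (List.perm_cons_erase h0), toW_zero_cons]
  apply XCoeff_clique G n b hb
  have := List.length_erase_of_mem h0
  have := List.length_pos_of_mem h0
  omega

lemma finite_colorings {V : Type*} [Fintype V] (G : SimpleGraph V) (w : List ℕ) :
    Finite {f : V → ℕ // IsProperColoring G f ∧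
      ∀ i, Nat.card {v : V // f v = i} = toW w i} := by
  have hle : ∀ f : {f : V → ℕ // IsProperColoring G f ∧
      ∀ i, Nat.card {v : V // f v = i} = toW w i}, ∀ v, f.1 v < w.length + 1 := by
    intro f v
    by_contra hc
    exact count_eq_zero ((f.2.2 (f.1 v)).trans (toW_ge _ _ (by omega))) v rfl
  refine Finite.of_injective (β := V → Fin (w.length + 1)) (fun f v => ⟨f.1 v, hle f v⟩) ?_
  intro f g hfg
  apply Subtype.ext
  funext v
  have := congrFun hfg v
  simpa using this

lemma toW_modify (l : List ℕ) (j i : ℕ) :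
    toW (l.modify j (· - 1)) i = toW l i - if i = l.length - j then 1 else 0 := by
  induction l generalizing j with
  | nil => cases i <;> simp [toW, rowsOf]
  | cons m l ih =>
    cases j with
    | zero =>
      have h := toW_ge l (l.length + 1) (by omega)
      simp only [List.modify_zero_cons, toW_cons, List.length_cons, Nat.sub_zero]
      by_cases hi : i = l.length + 1
      · subst hi
        simp [h]
      · simp [hi]
    | succ j =>
      simp only [List.modify_succ_cons, toW_cons, ih, List.length_modify, List.length_cons]
      split_ifs <;> omega

lemma count_elim {V : Type*} [Fintype V] (f : V → ℕ) (c i : ℕ) :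
    Nat.card {v : V ⊕ Fin 1 // Sum.elim f (fun _ => c) v = i} =
      Nat.card {v : V // f v = i} + if i = c then 1 else 0 := by
  rw [Nat.card_congr Equiv.subtypeSum, Nat.card_sum]
  congr 1
  simp only [Sum.elim_inr]
  split_ifs with h
  · subst h
    simp
  · rw [Nat.card_eq_zero]
    exact Or.inl ⟨fun v => h v.2.symm⟩

lemma toW_pos (l : List ℕ) (hl : ∀ x ∈ l, 0 < x) (i : ℕ) (h1 : 0 < i) (h2 : i ≤ l.length) :
    0 < toW l i := by
  obtain ⟨i, rfl⟩ : ∃ j, i = j + 1 := ⟨i - 1, by omega⟩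
  exact rowsOf_pos l hl i (by omega)

lemma proper_elim {V : Type*} (G : SimpleGraph V) (f : V → ℕ) (c : ℕ) :
    IsProperColoring (disjUnion G K1) (Sum.elim f (fun _ => c)) ↔
      IsProperColoring G f ∧ 0 < c := by
  unfold IsProperColoring disjUnion K1
  simp only [SimpleGraph.fromRel_adj, Sum.forall, Sum.elim_inl, Sum.elim_inr]
  constructor
  · rintro ⟨⟨h1, h2⟩, h3, -⟩
    refine ⟨⟨h1, fun u v huv => (h3 u).1 v ⟨?_, Or.inl huv⟩⟩, h2 0⟩
    intro h
    exact huv.ne (Sum.inl_injective h)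
  · rintro ⟨⟨h1, h2⟩, h3⟩
    refine ⟨⟨h1, fun _ => h3⟩, fun u => ⟨fun v huv => ?_, fun v huv => ?_⟩,
      fun u => ⟨fun v huv => ?_, fun v huv => ?_⟩⟩
    · rcases huv.2 with h | h
      · exact h2 _ _ h
      · exact (h2 _ _ h).symm
    · simp at huv
    · simp at huv
    · simp at huv

lemma XCoeff_K1 {V : Type*} [Fintype V] (G : SimpleGraph V) (l : List ℕ)
    (hl : ∀ x ∈ l, 0 < x) : XCoeff (disjUnion G K1) (toW l) =
      ∑ j ∈ Finset.range l.length, XCoeff G (toW (l.modify j (· - 1))) := by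
  have hfin := fun w => finite_colorings G w
  unfold XCoeff
  rw [Finset.sum_range (fun j => ((Nat.card {f : V → ℕ // IsProperColoring G f ∧
      ∀ i, Nat.card {v : V // f v = i} = toW (l.modify j (· - 1)) i} : ℕ) : ℚ)),
    ← Nat.cast_sum, ← Nat.card_sigma]
  congr 1
  symm
  apply Nat.card_congr
  refine Equiv.ofBijective (fun p => ⟨Sum.elim p.2.1 (fun _ => l.length - p.1.1), ?_, ?_⟩) ⟨?_, ?_⟩
  · rw [proper_elim]
    exact ⟨p.2.2.1, by have := p.1.2; omega⟩
  · intro i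
    rw [count_elim, p.2.2.2, toW_modify]
    split_ifs with h
    · have := p.1.2
      have := toW_pos l hl i (by omega) (by omega)
      omega
    · omega
  · rintro ⟨⟨j, hj⟩, f⟩ ⟨⟨j', hj'⟩, f'⟩ h
    have h1 := congrArg Subtype.val h
    have h2 := congrFun h1 (Sum.inr 0)
    simp only [Sum.elim_inr] at h2
    obtain rfl : j = j' := by omega
    have h3 : f = f' := by
      apply Subtype.ext
      funext v
      exact congrFun h1 (Sum.inl v)
    rw [h3]
  · rintro ⟨F, hF, hc⟩
    have hFe : F = Sum.elim (fun v => F (Sum.inl v)) (fun _ => F (Sum.inr 0)) := by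
      funext v
      rcases v with v | v
      · rfl
      · rw [Subsingleton.elim v 0]
        rfl
    have hF2 := hF
    rw [hFe, proper_elim] at hF2
    have hle : F (Sum.inr 0) ≤ l.length := by
      by_contra hcon
      exact count_eq_zero ((hc (F (Sum.inr 0))).trans (toW_ge _ _ (by omega))) _ rfl
    have hsub : l.length - (l.length - F (Sum.inr 0)) = F (Sum.inr 0) := by omega
    refine ⟨⟨⟨l.length - F (Sum.inr 0), by have := hF2.2; omega⟩,
      ⟨fun v => F (Sum.inl v), hF2.1, ?_⟩⟩, ?_⟩
    · intro i
      have := hc i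
      rw [hFe, count_elim] at this
      rw [toW_modify, hsub, ← this, Nat.add_sub_cancel]
    · apply Subtype.ext
      dsimp only
      rw [hsub]
      exact hFe.symm

lemma modify_append_right' (u v : List ℕ) (i : ℕ) (f : ℕ → ℕ) :
    (u ++ v).modify (u.length + i) f = u ++ v.modify i f := by
  induction u with
  | nil => simp
  | cons a u ih =>
    have : (a :: u).length + i = (u.length + i) + 1 := by simp; omega
    rw [this, List.cons_append, List.modify_succ_cons, ih, List.cons_append]

lemma modify_map_succ (w : List ℕ) (hw : ∀ x ∈ w, 0 < x) (i : ℕ) :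
    (w.map (· + 1)).modify i (· - 1) = (w.modify i (· - 1)).map (· + 1) := by
  induction w generalizing i with
  | nil => simp
  | cons a w ih =>
    have ha := hw a (by simp)
    cases i with
    | zero =>
      simp
      omega
    | succ i =>
      simp only [List.map_cons, List.modify_succ_cons]
      rw [ih (fun x hx => hw x (by simp [hx]))]

lemma zero_mem_modify (l : List ℕ) (j : ℕ) (hj : j < l.length) (h1 : l[j] = 1) :
    0 ∈ l.modify j (· - 1) := by
  have : (l.modify j (· - 1))[j]'(by simpa using hj) = 0 := by
    rw [List.getElem_modify]
    simp [h1]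
  rw [← this]
  exact List.getElem_mem _

lemma pad_filter_perm (n : ℕ) (w : List ℕ) (h : w.length ≤ n) :
    (pad n w).Perm (pad n (w.filter (· ≠ 0))) := by
  apply List.Perm.map
  have h1 : (w.filter (· = 0) ++ w.filter (fun x => !decide (x = 0))).Perm w :=
    List.filter_append_perm _ _
  have h2 : w.filter (· = 0) = List.replicate (w.filter (· = 0)).length 0 := by
    rw [List.eq_replicate_iff]
    exact ⟨rfl, fun x hx => by simpa using (List.mem_filter.1 hx).2⟩
  have h3 : w.filter (fun x => !decide (x = 0)) = w.filter (· ≠ 0) := by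
    congr 1
    funext x
    simp
  rw [h3] at h1
  have h4 := h1.length_eq
  rw [List.length_append] at h4
  have h5 : n - (w.filter (· ≠ 0)).length = (n - w.length) + (w.filter (· = 0)).length := by omega
  rw [h5, List.replicate_add, ← h2, List.append_assoc]
  exact List.Perm.append_left _ h1.symm

/-- The coefficient function obtained from `G`, insensitive to zeros. -/
noncomputable def gFun {V : Type*} [Fintype V] (G : SimpleGraph V) (n : ℕ) (w : List ℕ) : ℚ :=
  XCoeff G (toW (pad n (w.filter (· ≠ 0))))

lemma gFun_eq {V : Type*} [Fintype V] (G : SimpleGraph V) (n : ℕ) (w : List ℕ)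
    (h : w.length ≤ n) : gFun G n w = XCoeff G (toW (pad n w)) :=
  (XCoeff_perm G _ _ (pad_filter_perm n w h)).symm

lemma XCoeff_DD {V : Type*} [Fintype V] (G : SimpleGraph V) (n : ℕ) (b : Fin n → V)
    (hb : ∀ i j, i ≠ j → G.Adj (b i) (b j)) (w : List ℕ) (hw : ∀ x ∈ w, 0 < x)
    (hn : w.length ≤ n) :
    XCoeff (disjUnion G K1) (toW (pad n w)) = DD (gFun G n) w := by
  have hpos : ∀ x ∈ pad n w, 0 < x := by
    intro x hx
    obtain ⟨y, -, rfl⟩ := List.mem_map.1 hx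
    omega
  rw [XCoeff_K1 G _ hpos, pad_length n w hn]
  conv_lhs => rw [show n = (n - w.length) + w.length by omega]
  rw [Finset.sum_range_add]
  have hn' : n - w.length + w.length = n := by omega
  rw [hn', Finset.sum_eq_zero, zero_add, DD]
  · apply Finset.sum_congr rfl
    intro i hi
    rw [gFun_eq G n _ (by simpa using hn)]
    congr 2
    unfold pad
    rw [List.map_append, List.map_append, List.length_modify, ← modify_map_succ w hw]
    have := modify_append_right' (List.map (· + 1) (List.replicate (n - w.length) 0))
      (w.map (· + 1)) i (· - 1)
    simpa using this
  · intro j hj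
    rw [Finset.mem_range] at hj
    apply XCoeff_clique_zero G n b hb
    · rw [List.length_modify, pad_length n w hn]
    · apply zero_mem_modify _ _ (by rw [pad_length n w hn]; omega)
      simp [pad, hj]

lemma sCoeff_eq {V : Type*} [Fintype V] (G : SimpleGraph V) {N n k : ℕ} (b : Fin n → V)
    (hb : ∀ i j, i ≠ j → G.Adj (b i) (b j)) (hV : Fintype.card V = N)
    (hN : N = n + k) (hk : k ≤ n) (lam : Nat.Partition N) (hl : rows lam = ones n + ones k) :
    sCoeff (XCoeff G) lam = AA k (fun w => XCoeff G (toW (pad n w))) := by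
  have h := exists_expansion (N := N) (XCoeff G) (XCoeff_supp G N hV) (XCoeff_perm G)
  unfold sCoeff
  rw [dif_pos h]
  refine (extract hN hk h.choose (XCoeff G) (fun μ => ?_)
    (fun nu hnu => XCoeff_clique G n b hb _ hnu) lam hl).symm
  rw [h.choose_spec μ, Finsupp.sum_fintype _ _ (by simp)]

lemma genNet_clique (n m : ℕ) (i j : Fin n) (h : i ≠ j) :
    (genNet n m).Adj (Sum.inl i) (Sum.inl j) := by
  unfold genNet
  rw [SimpleGraph.fromRel_adj]
  exact ⟨fun he => h (Sum.inl_injective he), Or.inl trivial⟩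

lemma disjUnion_clique {V W : Type*} (G : SimpleGraph V) (H : SimpleGraph W) (u v : V)
    (h : G.Adj u v) : (disjUnion G H).Adj (Sum.inl u) (Sum.inl v) := by
  unfold disjUnion
  rw [SimpleGraph.fromRel_adj]
  exact ⟨fun he => h.ne (Sum.inl_injective he), Or.inl h⟩

/-- For `C ≥ 1` and `D ≥ 0`:
`[s_{(2^C,1^D)}] X_{GN_{C+D,C-1} ⊔ K₁} = [s_{(2^{C-1},1^{D+1})}] X_{GN_{C+D,C-1}}`. -/
theorem schurCoeff_remove_isolated_vertex (C D : ℕ) (hC : 1 ≤ C) :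
    sCoeff (XCoeff (disjUnion (genNet (C + D) (C - 1)) K1)) (twoOne C D) =
      sCoeff (XCoeff (genNet (C + D) (C - 1))) (twoOne (C - 1) (D + 1)) := by
  obtain ⟨k, rfl⟩ : ∃ k, C = k + 1 := ⟨C - 1, by omega⟩
  have hcl := genNet_clique (k + 1 + D) (k + 1 - 1)
  rw [sCoeff_eq (n := k + 1 + D) (k := k + 1) _ (fun i => Sum.inl (Sum.inl i))
      (fun i j h => disjUnion_clique _ _ _ _ (hcl i j h)) (by simp; omega) (by omega) (by omega) _
      (rows_twoOne _ _),
    sCoeff_eq (n := k + 1 + D) (k := k) _ (fun i => Sum.inl i) hcl (by simp; omega) (by omega)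
      (by omega) _ (by
        rw [rows_twoOne]
        congr 2
        omega)]
  have hlen : ∀ w : List ℕ, (∀ x ∈ w, 0 < x) → w.length ≤ w.sum := fun w hw =>
    List.length_le_sum_of_one_le w (fun x hx => hw x hx)
  rw [AA_congr (k + 1) _ (DD (gFun (genNet (k + 1 + D) (k + 1 - 1)) (k + 1 + D))), AA_DD]
  · apply AA_congr
    intro w hw hs
    apply gFun_eq
    have := hlen w hw
    omega
  · intro u v
    simp [gFun]
  · intro w hw hs
    apply XCoeff_DD _ _ _ hcl w hw
    have := hlen w hw
    omega
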